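/- Let Δ ⊆ ℝ³ be a 3-dimensional reflexive polytope. Then Σ_θ v(θ)·v(θ*) = 24, where the sum runs over all 1-dimensional faces (edges) θ of Δ, θ* is the dual edge of Δ*, and for an edge θ one has v(θ) = |θ ∩ ℤ³| − 1 (the lattice length). -/

import Mathlib

open MeasureTheory Filter Pointwise

noncomputable section

/-- The canonical embedding of a lattice point of `ℤ^d` into `ℝ^d`. -/
def coeLat {d : ℕ} (n : Fin d → ℤ) : Fin d → ℝ := fun i => (n i : ℝ)

/-- The set of lattice points lying in a subset `S ⊆ ℝ^d`. -/
def latticePoints {d : ℕ} (S : Set (Fin d → ℝ)) : Set (Fin d → ℤ) :=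
  {n | coeLat n ∈ S}

/-- A lattice polytope: the convex hull of finitely many points of `ℤ^d`. -/
def IsLatticePolytope {d : ℕ} (P : Set (Fin d → ℝ)) : Prop :=
  ∃ V : Finset (Fin d → ℤ), P = convexHull ℝ (coeLat '' (V : Set (Fin d → ℤ)))

/-- The dual (polar) body `P* = {y | ⟨y,x⟩ ≥ -1 ∀ x ∈ P}`. -/
def polarDual {d : ℕ} (P : Set (Fin d → ℝ)) : Set (Fin d → ℝ) :=
  {y | ∀ x ∈ P, -1 ≤ ∑ i, y i * x i}

/-- Dimension of a subset of `ℝ^d`: the dimension of its affine span. -/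
def dimSet {d : ℕ} (S : Set (Fin d → ℝ)) : ℕ :=
  Module.finrank ℝ (affineSpan ℝ S).direction

/-- A reflexive polytope: a lattice polytope containing the origin in its interior
whose dual is again a lattice polytope. -/
def IsReflexive {d : ℕ} (P : Set (Fin d → ℝ)) : Prop :=
  IsLatticePolytope P ∧ (0 : Fin d → ℝ) ∈ interior P ∧ IsLatticePolytope (polarDual P)

/-- A (nonempty, exposed) face of dimension `k` of a polytope `P`. -/
def IsFaceOfDim {d : ℕ} (P : Set (Fin d → ℝ)) (k : ℕ) (θ : Set (Fin d → ℝ)) : Prop :=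
  IsExposed ℝ P θ ∧ θ.Nonempty ∧ dimSet θ = k

/-- The dual face `θ* = {y ∈ P* | ⟨y,x⟩ = -1 ∀ x ∈ θ}` of a face `θ` of `P`. -/
def dualFace {d : ℕ} (P θ : Set (Fin d → ℝ)) : Set (Fin d → ℝ) :=
  {y ∈ polarDual P | ∀ x ∈ θ, ∑ i, y i * x i = -1}

/-- The normalized volume of a `k`-dimensional lattice polytope `θ ⊆ ℝ^d`:
`lim_{m → ∞} k! ⬝ |mθ ∩ ℤ^d| / m^k`. -/
def normVol {d : ℕ} (k : ℕ) (θ : Set (Fin d → ℝ)) : ℝ :=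
  limUnder atTop
    (fun m : ℕ => (Nat.factorial k : ℝ) * (latticePoints ((m : ℝ) • θ)).ncard / (m : ℝ) ^ k)

/-!
The proof computes the constant Todd class of the fan over the boundary of `Δ` combinatorially and
reads off its degree two part. The boundary is triangulated, regularly, by all of its lattice
points; reflexivity makes every cone over a triangle unimodular. To such a cone with generators
`a, b, c` belongs the product of the three functions `1 / (1 - e^{-x})`, where `x` runs over the
coordinates of `ξ` in the basis `a, b, c`.

Expand each factor as a geometric series convergent at `ξ`. When `ξ` crosses a wall, the jumps of
the two adjacent cones cancel, so the coefficient of `e^{-m·ξ}` in the sum over all cones is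
independent of generic `ξ`; moving `ξ` away shows that it vanishes for `m ≠ 0`, while for `m = 0`
exactly one cone contributes. Thus the sum over all cones is `1`.

Its part even in `ξ`, expanded at `ξ = 0`, relates the number of triangles to a sum over pairs of
adjacent triangles. Such a pair has supporting functionals which differ by a multiple of `a ⨯ b`,
and the multiplicity is the lattice length of the dual of the common edge. It vanishes unless that
edge lies on an edge `θ` of `Δ`, and `θ` contains `v(θ)` edges of the triangulation.
-/

open scoped Matrix

/-! ### Triple products and lattice vectors -/

section TripleProduct

variable {R : Type*} [CommRing R]

lemma triple_product_rotate (a b c : Fin 3 → R) : b ⨯₃ c ⬝ᵥ a = a ⨯₃ b ⬝ᵥ c := by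
  rw [dotProduct_comm, triple_product_permutation, triple_product_permutation, dotProduct_comm]

lemma cross_dotProduct_swap (a b c : Fin 3 → R) : b ⨯₃ a ⬝ᵥ c = -(a ⨯₃ b ⬝ᵥ c) := by
  rw [← cross_anticomm, neg_dotProduct]

lemma cross_dotProduct_left (a b : Fin 3 → R) : a ⨯₃ b ⬝ᵥ a = 0 := by
  rw [dotProduct_comm, dot_self_cross]

lemma cross_dotProduct_right (a b : Fin 3 → R) : a ⨯₃ b ⬝ᵥ b = 0 := by
  rw [dotProduct_comm, dot_cross_self]

lemma triple_product_mul_dotProduct (a b c ξ m : Fin 3 → R) :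
    a ⨯₃ b ⬝ᵥ c * m ⬝ᵥ ξ =
      b ⨯₃ c ⬝ᵥ ξ * m ⬝ᵥ a + c ⨯₃ a ⬝ᵥ ξ * m ⬝ᵥ b + a ⨯₃ b ⬝ᵥ ξ * m ⬝ᵥ c := by
  simp only [cross_apply, Matrix.vec3_dotProduct, Matrix.cons_val]
  ring

lemma triple_product_smul (a b c ξ : Fin 3 → R) :
    (a ⨯₃ b ⬝ᵥ c) • ξ = (b ⨯₃ c ⬝ᵥ ξ) • a + (c ⨯₃ a ⬝ᵥ ξ) • b + (a ⨯₃ b ⬝ᵥ ξ) • c :=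
  dotProduct_eq _ _ fun m ↦ by
    simp only [dotProduct_comm _ m, dotProduct_add, dotProduct_smul, smul_eq_mul]
    exact triple_product_mul_dotProduct a b c ξ m

lemma eq_add_smul_cross {a b c y m : Fin 3 → R} (h : a ⨯₃ b ⬝ᵥ c = 1) (ha : y ⬝ᵥ a = m ⬝ᵥ a)
    (hb : y ⬝ᵥ b = m ⬝ᵥ b) : y = m + (y ⬝ᵥ c - m ⬝ᵥ c) • a ⨯₃ b :=
  dotProduct_eq _ _ fun ξ ↦ by
    have hy := triple_product_mul_dotProduct a b c ξ y
    have hm := triple_product_mul_dotProduct a b c ξ m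
    rw [h, one_mul] at hy hm
    rw [add_dotProduct, smul_dotProduct, smul_eq_mul, hy, hm, ha, hb]
    ring

lemma triple_product_mul_triple_product (a b c ξ ξ' : Fin 3 → R) :
    a ⨯₃ b ⬝ᵥ c * ξ ⨯₃ ξ' ⬝ᵥ c =
      b ⨯₃ c ⬝ᵥ ξ * c ⨯₃ a ⬝ᵥ ξ' - b ⨯₃ c ⬝ᵥ ξ' * c ⨯₃ a ⬝ᵥ ξ := by
  simp only [cross_apply, Matrix.vec3_dotProduct, Matrix.cons_val]
  ring

lemma bijective_dotProduct_of_isUnit {a b c : Fin 3 → R} (h : IsUnit (a ⨯₃ b ⬝ᵥ c)) :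
    Function.Bijective fun m : Fin 3 → R ↦ (m ⬝ᵥ a, m ⬝ᵥ b, m ⬝ᵥ c) := by
  obtain ⟨r, hr⟩ := h.exists_left_inv
  refine ⟨fun m n hmn ↦ ?_,
    fun ⟨x, y, z⟩ ↦ ⟨r • (x • (b ⨯₃ c) + y • (c ⨯₃ a) + z • (a ⨯₃ b)), ?_⟩⟩
  · simp only [Prod.mk.injEq] at hmn
    refine dotProduct_eq _ _ fun ξ ↦ h.mul_left_cancel ?_
    have hm := triple_product_mul_dotProduct a b c ξ m
    rwa [hmn.1, hmn.2.1, hmn.2.2, ← triple_product_mul_dotProduct] at hm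
  · simp only [smul_dotProduct, add_dotProduct, smul_eq_mul, cross_dotProduct_left,
      cross_dotProduct_right, triple_product_rotate b c a, triple_product_rotate a b c]
    exact Prod.ext (by linear_combination x * hr)
      (Prod.ext (by linear_combination y * hr) (by linear_combination z * hr))

/-- Strict convexity of the squared norm on the triangle with vertices `a, b, c`, in terms of the
unnormalised barycentric coordinates of `p`. -/
lemma triple_product_mul_normSq {a b c p : Fin 3 → R}
    (hsum : b ⨯₃ c ⬝ᵥ p + c ⨯₃ a ⬝ᵥ p + a ⨯₃ b ⬝ᵥ p = a ⨯₃ b ⬝ᵥ c) :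
    a ⨯₃ b ⬝ᵥ c * (b ⨯₃ c ⬝ᵥ p * a ⬝ᵥ a + c ⨯₃ a ⬝ᵥ p * b ⬝ᵥ b + a ⨯₃ b ⬝ᵥ p * c ⬝ᵥ c -
        a ⨯₃ b ⬝ᵥ c * p ⬝ᵥ p) =
      b ⨯₃ c ⬝ᵥ p * c ⨯₃ a ⬝ᵥ p * (a - b) ⬝ᵥ (a - b) +
        c ⨯₃ a ⬝ᵥ p * a ⨯₃ b ⬝ᵥ p * (b - c) ⬝ᵥ (b - c) +
        b ⨯₃ c ⬝ᵥ p * a ⨯₃ b ⬝ᵥ p * (a - c) ⬝ᵥ (a - c) := by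
  have hp := triple_product_mul_dotProduct a b c p p
  have ha := triple_product_mul_dotProduct a b c p a
  have hb := triple_product_mul_dotProduct a b c p b
  have hc := triple_product_mul_dotProduct a b c p c
  simp only [sub_dotProduct, dotProduct_sub]
  rw [dotProduct_comm p a, dotProduct_comm p b, dotProduct_comm p c] at hp
  rw [dotProduct_comm b a, dotProduct_comm c a, dotProduct_comm c b] at *
  generalize b ⨯₃ c ⬝ᵥ p = x at *
  generalize c ⨯₃ a ⬝ᵥ p = y at *
  generalize a ⨯₃ b ⬝ᵥ p = z at *
  rw [← hsum] at *
  linear_combination -(x + y + z) * hp - x * ha - y * hb - z * hc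

lemma pairwise_ne_of_triple_product_ne_zero {a b c : Fin 3 → R} (h : a ⨯₃ b ⬝ᵥ c ≠ 0) :
    a ≠ b ∧ b ≠ c ∧ c ≠ a := by
  refine ⟨?_, ?_, ?_⟩ <;> rintro rfl <;> refine h ?_
  exacts [by rw [cross_self, zero_dotProduct], cross_dotProduct_right _ _,
    cross_dotProduct_left _ _]

lemma eq_of_triple_product_eq [IsDomain R] {a b c p : Fin 3 → R} (h : a ⨯₃ b ⬝ᵥ c ≠ 0)
    (hx : b ⨯₃ c ⬝ᵥ p = 0) (hy : c ⨯₃ a ⬝ᵥ p = 0) (hz : a ⨯₃ b ⬝ᵥ p = a ⨯₃ b ⬝ᵥ c) : p = c :=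
  dotProduct_eq _ _ fun m ↦ mul_left_cancel₀ h <| by
    rw [dotProduct_comm p, dotProduct_comm c, triple_product_mul_dotProduct, hx, hy, hz]
    ring

lemma eq_vertex_of_triple_products_mul_eq_zero [IsDomain R] {a b c p : Fin 3 → R}
    (h : a ⨯₃ b ⬝ᵥ c ≠ 0) (hsum : b ⨯₃ c ⬝ᵥ p + c ⨯₃ a ⬝ᵥ p + a ⨯₃ b ⬝ᵥ p = a ⨯₃ b ⬝ᵥ c)
    (hxy : b ⨯₃ c ⬝ᵥ p * c ⨯₃ a ⬝ᵥ p = 0) (hyz : c ⨯₃ a ⬝ᵥ p * a ⨯₃ b ⬝ᵥ p = 0)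
    (hxz : b ⨯₃ c ⬝ᵥ p * a ⨯₃ b ⬝ᵥ p = 0) : p = a ∨ p = b ∨ p = c := by
  have hbca := triple_product_rotate a b c
  have hcab := (triple_product_rotate b c a).trans hbca
  by_cases hz : a ⨯₃ b ⬝ᵥ p = 0
  · rcases mul_eq_zero.1 hxy with hx | hy
    · refine Or.inr (Or.inl (eq_of_triple_product_eq (hcab ▸ h) hz hx ?_))
      rw [hcab, ← hsum, hx, hz, zero_add, add_zero]
    · refine Or.inl (eq_of_triple_product_eq (hbca ▸ h) hy hz ?_)
      rw [hbca, ← hsum, hy, hz, add_zero, add_zero]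
  · have hx := (mul_eq_zero_iff_right hz).1 hxz
    have hy := (mul_eq_zero_iff_right hz).1 hyz
    exact Or.inr (Or.inr (eq_of_triple_product_eq h hx hy (by rw [← hsum, hx, hy]; ring)))

lemma isUnit_triple_product_of_forall_dvd [IsDomain R] {a b c : Fin 3 → R}
    (h : a ⨯₃ b ⬝ᵥ c ≠ 0)
    (hdvd : ∀ x, a ⨯₃ b ⬝ᵥ c ∣ b ⨯₃ c ⬝ᵥ x ∧ a ⨯₃ b ⬝ᵥ c ∣ c ⨯₃ a ⬝ᵥ x ∧
      a ⨯₃ b ⬝ᵥ c ∣ a ⨯₃ b ⬝ᵥ x) :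
    IsUnit (a ⨯₃ b ⬝ᵥ c) := by
  have hcoord := fun i ↦ hdvd (Pi.single i 1)
  simp only [dotProduct_single, mul_one] at hcoord
  choose x hx using fun i ↦ (hcoord i).1
  choose y hy using fun i ↦ (hcoord i).2.1
  choose z hz using fun i ↦ (hcoord i).2.2
  have hdual : (b ⨯₃ c) ⨯₃ (c ⨯₃ a) ⬝ᵥ (a ⨯₃ b) = (a ⨯₃ b ⬝ᵥ c) ^ 2 := by
    simp only [cross_apply, Matrix.vec3_dotProduct, Matrix.cons_val]
    ring
  have hbc : b ⨯₃ c = (a ⨯₃ b ⬝ᵥ c) • x := funext hx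
  have hca : c ⨯₃ a = (a ⨯₃ b ⬝ᵥ c) • y := funext hy
  have hab : a ⨯₃ b = (a ⨯₃ b ⬝ᵥ c) • z := funext hz
  generalize a ⨯₃ b ⬝ᵥ c = D at *
  simp only [hbc, hca, hab, map_smul, LinearMap.smul_apply, smul_dotProduct, dotProduct_smul,
    smul_eq_mul] at hdual
  refine IsUnit.of_mul_eq_one (x ⨯₃ y ⬝ᵥ z) (mul_left_cancel₀ (pow_ne_zero 2 h) ?_)
  linear_combination hdual

end TripleProduct

lemma coeLat_injective {d : ℕ} : Function.Injective (coeLat (d := d)) := fun _ _ h ↦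
  funext fun i ↦ Int.cast_injective (congrFun h i)

lemma coeLat_zero {d : ℕ} : coeLat (0 : Fin d → ℤ) = 0 := by
  ext; simp [coeLat]

lemma coeLat_add {d : ℕ} (m n : Fin d → ℤ) : coeLat (m + n) = coeLat m + coeLat n := by
  ext; simp [coeLat]

lemma coeLat_zsmul {d : ℕ} (k : ℤ) (n : Fin d → ℤ) : coeLat (k • n) = (k : ℝ) • coeLat n := by
  ext; simp [coeLat]

lemma coeLat_dotProduct_coeLat {d : ℕ} (m n : Fin d → ℤ) :
    coeLat m ⬝ᵥ coeLat n = (m ⬝ᵥ n : ℤ) :=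
  ((Int.castRingHom ℝ).map_dotProduct m n).symm

lemma coeLat_cross (a b : Fin 3 → ℤ) : coeLat (a ⨯₃ b) = coeLat a ⨯₃ coeLat b := by
  ext i
  fin_cases i <;> simp [coeLat, cross_apply]

/-! ### Generic points -/

section Generic

variable {E ι : Type*} [AddCommGroup E] [Module ℝ E] [TopologicalSpace E] [ContinuousAdd E]
  [ContinuousSMul ℝ E]

lemma isOpen_and_dense_setOf_forall_apply_ne (s : Finset ι) (f : ι → E →L[ℝ] ℝ) (c : ι → ℝ)
    (hf : ∀ i ∈ s, f i ≠ 0) :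
    IsOpen {x | ∀ i ∈ s, f i x ≠ c i} ∧ Dense {x | ∀ i ∈ s, f i x ≠ c i} := by
  classical
  induction s using Finset.induction_on with
  | empty => simp [dense_univ]
  | insert i s _ ih =>
    obtain ⟨hopen, hdense⟩ := ih fun j hj ↦ hf j (Finset.mem_insert_of_mem hj)
    have hopen_i : IsOpen {x | f i x ≠ c i} := isOpen_ne_fun (f i).continuous continuous_const
    have hdense_i : Dense {x | f i x ≠ c i} := (dense_compl_singleton (c i)).preimage
      ((f i).isOpenMap_of_ne_zero (hf i (Finset.mem_insert_self i s)))
    simp only [Finset.forall_mem_insert, Set.ofPred_and]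
    exact ⟨hopen_i.inter hopen, hdense_i.inter_of_isOpen_left hdense hopen_i⟩

lemma isOpen_and_dense_setOf_forall_dotProduct_ne {n : Type*} [Fintype n] (s : Finset ι)
    (u : ι → n → ℝ) (c : ι → ℝ) (hu : ∀ i ∈ s, u i ≠ 0) :
    IsOpen {x | ∀ i ∈ s, u i ⬝ᵥ x ≠ c i} ∧ Dense {x | ∀ i ∈ s, u i ⬝ᵥ x ≠ c i} := by
  refine isOpen_and_dense_setOf_forall_apply_ne s
    (fun i ↦ (dotProductBilin ℝ ℝ (u i)).toContinuousLinearMap) c fun i hi h ↦ hu i hi ?_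
  exact dotProduct_self_eq_zero.1 (congrArg (fun f : (n → ℝ) →L[ℝ] ℝ ↦ f (u i)) h)

end Generic

/-! ### Closed oriented surfaces -/

/-- A closed oriented triangulated surface with vertices in `α`, encoded by all its positively
oriented triangles `(a, b, c)`; each geometric triangle thus occurs three times, once for each
choice of first vertex. Every oriented edge lies in at most one triangle, and its reverse lies in
one as soon as the edge does. -/
structure IsOrientedSurface {α : Type*} (M : Finset (α × α × α)) : Prop where
  rotate : ∀ {a b c}, (a, b, c) ∈ M → (b, c, a) ∈ M
  exists_adjacent : ∀ {a b c}, (a, b, c) ∈ M → ∃ d, (b, a, d) ∈ M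
  apex_unique : ∀ {a b c c'}, (a, b, c) ∈ M → (a, b, c') ∈ M → c = c'

open Classical in
/-- The edges of the triangles of an oriented surface, each taken with the orientation induced by
the triangle. In a closed surface every edge thus occurs with both orientations. -/
def orientedEdges {α : Type*} (M : Finset (α × α × α)) : Finset (α × α) :=
  M.image fun t ↦ (t.1, t.2.1)

lemma mem_orientedEdges {α : Type*} {M : Finset (α × α × α)} {a b : α} :
    (a, b) ∈ orientedEdges M ↔ ∃ c, (a, b, c) ∈ M := by
  simp [orientedEdges]

namespace IsOrientedSurface

variable {α : Type*} {M : Finset (α × α × α)}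

lemma sum_rotate {A : Type*} [AddCommMonoid A] (h : IsOrientedSurface M) (F : α → α → α → A) :
    ∑ t ∈ M, F t.2.1 t.2.2 t.1 = ∑ t ∈ M, F t.1 t.2.1 t.2.2 :=
  Finset.sum_nbij' (fun t ↦ (t.2.1, t.2.2, t.1)) (fun t ↦ (t.2.2, t.1, t.2.1))
    (fun _ ht ↦ h.rotate ht) (fun _ ht ↦ h.rotate (h.rotate ht)) (fun _ _ ↦ rfl) (fun _ _ ↦ rfl)
    fun _ _ ↦ rfl

lemma sum_eq_zero_of_adjacent (h : IsOrientedSurface M) (F : α → α → α → ℝ)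
    (hF : ∀ a b c d, (a, b, c) ∈ M → (b, a, d) ∈ M → F a b c + F b a d = 0) :
    ∑ t ∈ M, F t.1 t.2.1 t.2.2 = 0 := by
  obtain rfl | ⟨t₀, -⟩ := M.eq_empty_or_nonempty
  · simp
  have : Nonempty α := ⟨t₀.1⟩
  choose! d hd using fun t : α × α × α ↦ fun ht : t ∈ M ↦ h.exists_adjacent (c := t.2.2) ht
  have flip_flip : ∀ t ∈ M, (t.1, t.2.1, d (t.2.1, t.1, d t)) = t := fun t ht ↦
    Prod.ext rfl (Prod.ext rfl (h.apex_unique (hd _ (hd t ht)) ht))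
  have hflip : ∑ t ∈ M, F t.2.1 t.1 (d t) = ∑ t ∈ M, F t.1 t.2.1 t.2.2 :=
    Finset.sum_nbij' (fun t ↦ (t.2.1, t.1, d t)) (fun t ↦ (t.2.1, t.1, d t)) hd hd
      flip_flip flip_flip fun _ _ ↦ rfl
  have hcancel : ∑ t ∈ M, (F t.1 t.2.1 t.2.2 + F t.2.1 t.1 (d t)) = 0 :=
    Finset.sum_eq_zero fun t ht ↦ hF _ _ _ _ ht (hd t ht)
  rw [Finset.sum_add_distrib, hflip] at hcancel
  linarith

lemma swap_mem_orientedEdges (h : IsOrientedSurface M) {a b : α} (hab : (a, b) ∈ orientedEdges M) :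
    (b, a) ∈ orientedEdges M :=
  have ⟨_, hc⟩ := mem_orientedEdges.1 hab
  mem_orientedEdges.2 (h.exists_adjacent hc)

lemma sum_orientedEdges {A : Type*} [AddCommMonoid A] (h : IsOrientedSurface M) (K : α × α → A) :
    ∑ e ∈ orientedEdges M, K e = ∑ t ∈ M, K (t.1, t.2.1) := by
  classical
  rw [orientedEdges, Finset.sum_image]
  rintro ⟨a, b, c⟩ hc ⟨a', b', c'⟩ hc' heq
  obtain ⟨rfl, rfl⟩ := Prod.mk.inj heq
  rw [h.apex_unique hc hc']

end IsOrientedSurface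

/-- A closed oriented surface all of whose triangles span unimodular cones: the combinatorial part
of a complete unimodular fan. -/
structure IsUnimodularSurface (M : Finset ((Fin 3 → ℤ) × (Fin 3 → ℤ) × (Fin 3 → ℤ))) : Prop
    extends IsOrientedSurface M where
  triple_product_eq_one : ∀ {a b c}, (a, b, c) ∈ M → a ⨯₃ b ⬝ᵥ c = 1

/-- The linear form vanishing on the wall spanned by `a` and `b`. For a unimodular triple
`(a, b, c)`, the forms of `(b, c)`, `(c, a)` and `(a, b)` are the coordinates in the basis
`a, b, c`. -/
def wallForm (a b : Fin 3 → ℤ) (ξ : Fin 3 → ℝ) : ℝ :=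
  coeLat (a ⨯₃ b) ⬝ᵥ ξ

lemma wallForm_swap (a b : Fin 3 → ℤ) (ξ : Fin 3 → ℝ) : wallForm b a ξ = -wallForm a b ξ := by
  rw [wallForm, wallForm, coeLat_cross, coeLat_cross, cross_dotProduct_swap]

lemma wallForm_smul (a b : Fin 3 → ℤ) (s : ℝ) (ξ : Fin 3 → ℝ) :
    wallForm a b (s • ξ) = s * wallForm a b ξ := by
  simp [wallForm]

lemma wallForm_neg (a b : Fin 3 → ℤ) (ξ : Fin 3 → ℝ) : wallForm a b (-ξ) = -wallForm a b ξ := by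
  simp [wallForm]

lemma wallForm_coeLat (a b c : Fin 3 → ℤ) : wallForm a b (coeLat c) = (a ⨯₃ b ⬝ᵥ c : ℤ) :=
  coeLat_dotProduct_coeLat _ _

lemma wallForm_mul_dotProduct (a b c : Fin 3 → ℤ) (ξ u : Fin 3 → ℝ) :
    wallForm a b (coeLat c) * u ⬝ᵥ ξ = wallForm b c ξ * u ⬝ᵥ coeLat a +
      wallForm c a ξ * u ⬝ᵥ coeLat b + wallForm a b ξ * u ⬝ᵥ coeLat c := by
  simpa only [wallForm, coeLat_cross] using triple_product_mul_dotProduct _ _ _ ξ u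

lemma coeLat_dotProduct_eq_of_unimodular {a b c : Fin 3 → ℤ} (h : a ⨯₃ b ⬝ᵥ c = 1)
    (m : Fin 3 → ℤ) (ξ : Fin 3 → ℝ) :
    coeLat m ⬝ᵥ ξ = wallForm b c ξ * (m ⬝ᵥ a : ℤ) + wallForm c a ξ * (m ⬝ᵥ b : ℤ) +
      wallForm a b ξ * (m ⬝ᵥ c : ℤ) := by
  simpa only [wallForm_coeLat, h, Int.cast_one, one_mul, coeLat_dotProduct_coeLat] using
    wallForm_mul_dotProduct a b c ξ (coeLat m)

lemma cross_dotProduct_eq_of_unimodular {a b c : Fin 3 → ℤ} (h : a ⨯₃ b ⬝ᵥ c = 1)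
    (ξ ξ' : Fin 3 → ℝ) :
    ξ ⨯₃ ξ' ⬝ᵥ coeLat c =
      wallForm b c ξ * wallForm c a ξ' - wallForm b c ξ' * wallForm c a ξ := by
  have hdet : coeLat a ⨯₃ coeLat b ⬝ᵥ coeLat c = 1 := by
    rw [← coeLat_cross, coeLat_dotProduct_coeLat, h, Int.cast_one]
  simpa only [wallForm, coeLat_cross, hdet, one_mul] using
    triple_product_mul_triple_product (coeLat a) (coeLat b) (coeLat c) ξ ξ'

/-! ### Wall crossing -/

/-- The indicator of the positive half-line. -/
def posIndicator (x : ℝ) : ℝ := if 0 < x then 1 else 0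

/-- The coefficient of `e^{-kx}` in the expansion of `1 / (1 - e^{-x})` that converges at `x`:
`∑_{k ≥ 0} e^{-kx}` if `x > 0`, and `-∑_{k < 0} e^{-kx}` if `x < 0`. -/
def geomCoeff (x : ℝ) (k : ℤ) : ℝ := posIndicator x - if k < 0 then 1 else 0

lemma posIndicator_neg {x : ℝ} (hx : x ≠ 0) : posIndicator (-x) = 1 - posIndicator x := by
  rcases hx.lt_or_gt with h | h <;> simp [posIndicator, h, h.not_gt]

lemma mul_nonneg_of_geomCoeff_ne_zero {x : ℝ} {k : ℤ} (h : geomCoeff x k ≠ 0) : 0 ≤ x * k := by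
  rcases lt_or_ge 0 x with hx | hx <;> rcases lt_or_ge k 0 with hk | hk
  · simp [geomCoeff, posIndicator, hx, hk] at h
  · positivity
  · exact mul_nonneg_of_nonpos_of_nonpos hx (mod_cast hk.le)
  · simp [geomCoeff, posIndicator, hx.not_gt, hk.not_gt] at h

lemma posIndicator_convexCombination {t y y' : ℝ} (ht₀ : 0 ≤ t) (ht₁ : t ≤ 1) (hy : y ≠ y')
    (h : (1 - t) * y + t * y' ≠ 0) :
    posIndicator ((1 - t) * y + t * y') =
      if t < y / (y - y') then posIndicator y else posIndicator y' := by
  unfold posIndicator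
  rcases hy.lt_or_gt with hlt | hlt
  · simp only [lt_div_iff_of_neg (sub_neg.2 hlt)]
    split_ifs <;> first | rfl | (exfalso; first | nlinarith | exact h (by nlinarith))
  · simp only [lt_div_iff₀ (sub_pos.2 hlt)]
    split_ifs <;> first | rfl | (exfalso; nlinarith)

/-- At the time `x / (x - x')` at which the affine path from `x` to `x'` crosses zero, the affine
path from `y` to `y'` takes the value `(x * y' - x' * y) / (x - x')`. -/
lemma posIndicator_at_crossing {x x' y y' : ℝ} (hx : x ≠ x') (hy : y ≠ y')
    (h : x * y' - x' * y ≠ 0) :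
    (posIndicator x - posIndicator x') * posIndicator ((x * y' - x' * y) / (x - x')) =
      (posIndicator x - posIndicator x') *
        if x / (x - x') < y / (y - y') then posIndicator y else posIndicator y' := by
  by_cases hsign : 0 < x ↔ 0 < x'
  · simp [posIndicator, hsign]
  have hx₀ : x - x' ≠ 0 := sub_ne_zero.2 hx
  have hvalue : (x * y' - x' * y) / (x - x') =
      (1 - x / (x - x')) * y + x / (x - x') * y' := by
    field_simp
    ring
  have htime : 0 ≤ x / (x - x') ∧ x / (x - x') ≤ 1 := by
    rcases lt_or_ge 0 x with hpos | hneg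
    · have hx' : x' ≤ 0 := not_lt.1 fun h' ↦ hsign (by simp [hpos, h'])
      exact ⟨div_nonneg hpos.le (by linarith), (div_le_one (by linarith)).2 (by linarith)⟩
    · have hx' : 0 < x' := not_le.1 fun h' ↦ hsign (by simp [hneg.not_gt, h'.not_gt])
      exact ⟨div_nonneg_of_nonpos hneg (by linarith),
        (div_le_one_of_neg (by linarith)).2 (by linarith)⟩
  rw [hvalue, posIndicator_convexCombination htime.1 htime.2 hy]
  rw [← hvalue]
  exact div_ne_zero h hx₀

/-- A product of three step functions with jumps at distinct times changes by the sum of its three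
jumps. -/
lemma mul_mul_sub_mul_mul_eq_sum_jumps (p q r p' q' r' α β γ : ℝ) {t₁ t₂ t₃ : ℝ} (h₁₂ : t₁ ≠ t₂)
    (h₁₃ : t₁ ≠ t₃) (h₂₃ : t₂ ≠ t₃) :
    (p - α) * (q - β) * (r - γ) - (p' - α) * (q' - β) * (r' - γ) =
      (p - p') * ((if t₁ < t₂ then q else q') - β) * ((if t₁ < t₃ then r else r') - γ) +
      (q - q') * ((if t₂ < t₃ then r else r') - γ) * ((if t₂ < t₁ then p else p') - α) +
      (r - r') * ((if t₃ < t₁ then p else p') - α) * ((if t₃ < t₂ then q else q') - β) := by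
  rcases h₁₂.lt_or_gt with h | h <;> rcases h₁₃.lt_or_gt with h' | h' <;>
    rcases h₂₃.lt_or_gt with h'' | h'' <;>
    first
    | (exfalso; linarith)
    | (simp only [h, h', h'', h.not_gt, h'.not_gt, h''.not_gt, if_true, if_false]; ring)

/-- The jump of `geomCoeff x i * geomCoeff y j * geomCoeff z k` along the affine path from
`(x, y, z)` to `(x', y', z')` at the time where the first coordinate vanishes. -/
def crossingJump (x x' y y' z z' : ℝ) (j k : ℤ) : ℝ :=
  (posIndicator x - posIndicator x') * geomCoeff ((x * y' - x' * y) / (x - x')) j *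
    geomCoeff ((x * z' - x' * z) / (x - x')) k

lemma crossingJump_eq {x x' y y' z z' : ℝ} (j k : ℤ) (hx : x ≠ x') (hy : y ≠ y') (hz : z ≠ z')
    (hxy : x * y' - x' * y ≠ 0) (hxz : x * z' - x' * z ≠ 0) :
    crossingJump x x' y y' z z' j k = (posIndicator x - posIndicator x') *
      ((if x / (x - x') < y / (y - y') then posIndicator y else posIndicator y') -
        if j < 0 then 1 else 0) *
      ((if x / (x - x') < z / (z - z') then posIndicator z else posIndicator z') -
        if k < 0 then 1 else 0) := by
  have hcy := posIndicator_at_crossing hx hy hxy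
  have hcz := posIndicator_at_crossing hx hz hxz
  rw [crossingJump, geomCoeff, geomCoeff]
  linear_combination
    (posIndicator ((x * z' - x' * z) / (x - x')) - if k < 0 then 1 else 0) * hcy +
    ((if x / (x - x') < y / (y - y') then posIndicator y else posIndicator y') -
      if j < 0 then 1 else 0) * hcz

lemma geomCoeff_prod_sub_eq_sum_crossingJump {x x' y y' z z' : ℝ} (i j k : ℤ) (hx : x ≠ x')
    (hy : y ≠ y') (hz : z ≠ z') (hxy : x * y' - x' * y ≠ 0) (hyz : y * z' - y' * z ≠ 0)
    (hzx : z * x' - z' * x ≠ 0) :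
    geomCoeff x i * geomCoeff y j * geomCoeff z k -
        geomCoeff x' i * geomCoeff y' j * geomCoeff z' k =
      crossingJump x x' y y' z z' j k + crossingJump y y' z z' x x' k i +
        crossingJump z z' x x' y y' i j := by
  have times_ne : ∀ {u u' v v' : ℝ}, u ≠ u' → v ≠ v' → u * v' - u' * v ≠ 0 →
      u / (u - u') ≠ v / (v - v') := fun hu hv huv h ↦ huv <| by
    rw [div_eq_div_iff (sub_ne_zero.2 hu) (sub_ne_zero.2 hv)] at h
    linarith
  have ne_swap : ∀ {u u' v v' : ℝ}, u * v' - u' * v ≠ 0 → v * u' - v' * u ≠ 0 :=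
    fun h h' ↦ h (by linarith)
  rw [crossingJump_eq j k hx hy hz hxy (ne_swap hzx),
    crossingJump_eq k i hy hz hx hyz (ne_swap hxy),
    crossingJump_eq i j hz hx hy hzx (ne_swap hyz)]
  exact mul_mul_sub_mul_mul_eq_sum_jumps _ _ _ _ _ _ _ _ _ (times_ne hx hy hxy)
    (times_ne hx hz (ne_swap hzx)) (times_ne hy hz hyz)

/-- The contribution of the cone over `(a, b, c)` to the coefficient of `e^{-m·ξ}`. -/
def coneCoeff (ξ : Fin 3 → ℝ) (m a b c : Fin 3 → ℤ) : ℝ :=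
  geomCoeff (wallForm b c ξ) (m ⬝ᵥ a) * geomCoeff (wallForm c a ξ) (m ⬝ᵥ b) *
    geomCoeff (wallForm a b ξ) (m ⬝ᵥ c)

/-- The change of the cone coefficients when `ξ`, moving to `ξ'`, crosses the wall spanned by `b`
and `c`, seen from the side of the triangle `(a, b, c)`. -/
def wallJump (ξ ξ' : Fin 3 → ℝ) (m b c : Fin 3 → ℤ) : ℝ :=
  (posIndicator (wallForm b c ξ) - posIndicator (wallForm b c ξ')) *
    geomCoeff (ξ ⨯₃ ξ' ⬝ᵥ coeLat c / (wallForm b c ξ - wallForm b c ξ')) (m ⬝ᵥ b) *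
    geomCoeff (-(ξ ⨯₃ ξ' ⬝ᵥ coeLat b) / (wallForm b c ξ - wallForm b c ξ')) (m ⬝ᵥ c)

lemma wallJump_swap {ξ ξ' : Fin 3 → ℝ} (m : Fin 3 → ℤ) {b c : Fin 3 → ℤ}
    (h : wallForm b c ξ ≠ 0) (h' : wallForm b c ξ' ≠ 0) :
    wallJump ξ ξ' m c b = -wallJump ξ ξ' m b c := by
  rw [wallJump, wallJump, wallForm_swap b c, wallForm_swap b c, posIndicator_neg h,
    posIndicator_neg h', neg_sub_neg, ← neg_sub (wallForm b c ξ), div_neg, ← neg_div,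
    neg_div_neg_eq]
  ring

lemma coneCoeff_sub_coneCoeff {a b c : Fin 3 → ℤ} (h : a ⨯₃ b ⬝ᵥ c = 1) {ξ ξ' : Fin 3 → ℝ}
    (m : Fin 3 → ℤ) (hbc : wallForm b c ξ ≠ wallForm b c ξ')
    (hca : wallForm c a ξ ≠ wallForm c a ξ') (hab : wallForm a b ξ ≠ wallForm a b ξ')
    (ha : ξ ⨯₃ ξ' ⬝ᵥ coeLat a ≠ 0) (hb : ξ ⨯₃ ξ' ⬝ᵥ coeLat b ≠ 0)
    (hc : ξ ⨯₃ ξ' ⬝ᵥ coeLat c ≠ 0) :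
    coneCoeff ξ m a b c - coneCoeff ξ' m a b c =
      wallJump ξ ξ' m b c + wallJump ξ ξ' m c a + wallJump ξ ξ' m a b := by
  have h' : b ⨯₃ c ⬝ᵥ a = 1 := by rw [triple_product_rotate, h]
  have h'' : c ⨯₃ a ⬝ᵥ b = 1 := by rw [triple_product_rotate, h']
  have ec := cross_dotProduct_eq_of_unimodular h ξ ξ'
  have ea := cross_dotProduct_eq_of_unimodular h' ξ ξ'
  have eb := cross_dotProduct_eq_of_unimodular h'' ξ ξ'
  rw [coneCoeff, coneCoeff, geomCoeff_prod_sub_eq_sum_crossingJump _ _ _ hbc hca hab (ec ▸ hc)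
    (ea ▸ ha) (eb ▸ hb)]
  have neg_eq : ∀ u u' v v' : ℝ, -(u * v' - u' * v) = v * u' - v' * u := by intros; ring
  simp only [crossingJump, wallJump, ea, eb, ec, neg_eq]

/-! ### The coefficients of a fan -/

section FanCoeff

variable {M : Finset ((Fin 3 → ℤ) × (Fin 3 → ℤ) × (Fin 3 → ℤ))}

/-- A point lying on none of the walls of `M`. -/
def IsGeneric (M : Finset ((Fin 3 → ℤ) × (Fin 3 → ℤ) × (Fin 3 → ℤ))) (ξ : Fin 3 → ℝ) : Prop :=
  ∀ ⦃a b c⦄, (a, b, c) ∈ M → wallForm a b ξ ≠ 0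

/-- The coefficient of `e^{-m·ξ}` in the sum over the triangles of `M` of the products
`∏ 1 / (1 - e^{-x})`, `x` running over the coordinates of `ξ`. For `m = 0` it is three times the
number of times the cones of `M` cover `ξ`. -/
def fanCoeff (M : Finset ((Fin 3 → ℤ) × (Fin 3 → ℤ) × (Fin 3 → ℤ))) (ξ : Fin 3 → ℝ)
    (m : Fin 3 → ℤ) : ℝ :=
  ∑ t ∈ M, coneCoeff ξ m t.1 t.2.1 t.2.2

/-- The position of `ξ'` relative to `ξ` for which the segment joining them crosses the walls of
`M` one at a time. -/
structure IsTransverse (M : Finset ((Fin 3 → ℤ) × (Fin 3 → ℤ) × (Fin 3 → ℤ)))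
    (ξ ξ' : Fin 3 → ℝ) : Prop where
  isGeneric : IsGeneric M ξ'
  wallForm_ne : ∀ ⦃a b c⦄, (a, b, c) ∈ M → wallForm a b ξ ≠ wallForm a b ξ'
  cross_dotProduct_ne : ∀ ⦃a b c⦄, (a, b, c) ∈ M → ξ ⨯₃ ξ' ⬝ᵥ coeLat a ≠ 0

lemma IsGeneric.smul {ξ : Fin 3 → ℝ} (hξ : IsGeneric M ξ) {s : ℝ} (hs : s ≠ 0) :
    IsGeneric M (s • ξ) := fun _ _ _ ht ↦ by
  rw [wallForm_smul]
  exact mul_ne_zero hs (hξ ht)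

lemma IsGeneric.neg {ξ : Fin 3 → ℝ} (hξ : IsGeneric M ξ) : IsGeneric M (-ξ) := fun _ _ _ ht ↦ by
  rw [wallForm_neg]
  exact neg_ne_zero.2 (hξ ht)

namespace IsUnimodularSurface

lemma cross_ne_zero (h : IsUnimodularSurface M) {t : (Fin 3 → ℤ) × (Fin 3 → ℤ) × (Fin 3 → ℤ)}
    (ht : t ∈ M) : coeLat (t.1 ⨯₃ t.2.1) ≠ 0 := fun h₀ ↦ by
  have hdet := h.triple_product_eq_one ht
  rw [coeLat_injective (h₀.trans coeLat_zero.symm), zero_dotProduct] at hdet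
  exact zero_ne_one hdet

lemma isOpen_and_dense_setOf_isGeneric (h : IsUnimodularSurface M) :
    IsOpen {ξ | IsGeneric M ξ} ∧ Dense {ξ | IsGeneric M ξ} := by
  simpa only [Prod.forall, IsGeneric, wallForm] using isOpen_and_dense_setOf_forall_dotProduct_ne M
    (fun t ↦ coeLat (t.1 ⨯₃ t.2.1)) (fun _ ↦ 0) fun _ ht ↦ h.cross_ne_zero ht

lemma isOpen_and_dense_setOf_isTransverse (h : IsUnimodularSurface M) {ξ : Fin 3 → ℝ}
    (hξ : IsGeneric M ξ) :
    IsOpen {ξ' | IsTransverse M ξ ξ'} ∧ Dense {ξ' | IsTransverse M ξ ξ'} := by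
  have hgen := h.isOpen_and_dense_setOf_isGeneric
  have hwall := isOpen_and_dense_setOf_forall_dotProduct_ne M (fun t ↦ coeLat (t.1 ⨯₃ t.2.1))
    (fun t ↦ wallForm t.1 t.2.1 ξ) fun _ ht ↦ h.cross_ne_zero ht
  have hray := isOpen_and_dense_setOf_forall_dotProduct_ne M (fun t ↦ coeLat t.1 ⨯₃ ξ) 0
    fun _ ht h₀ ↦ hξ ht <| by
      rw [wallForm, coeLat_cross, ← triple_product_rotate, ← triple_product_rotate,
        ← cross_anticomm, h₀, neg_zero, zero_dotProduct]
  have heq : {ξ' | IsTransverse M ξ ξ'} = {ξ' | IsGeneric M ξ'} ∩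
      ({ξ' | ∀ t ∈ M, coeLat (t.1 ⨯₃ t.2.1) ⬝ᵥ ξ' ≠ wallForm t.1 t.2.1 ξ} ∩
        {ξ' | ∀ t ∈ M, coeLat t.1 ⨯₃ ξ ⬝ᵥ ξ' ≠ 0}) := by
    ext ξ'
    refine ⟨fun hT ↦ ⟨hT.isGeneric, fun t ht ↦ (hT.wallForm_ne ht).symm, fun t ht ↦ ?_⟩,
      fun hT ↦ ⟨hT.1, fun a b c ht ↦ (hT.2.1 (a, b, c) ht).symm,
        fun a b c ht ↦ ?_⟩⟩
    · rw [← triple_product_rotate]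
      exact hT.cross_dotProduct_ne ht
    · rw [triple_product_rotate]
      exact hT.2.2 (a, b, c) ht
  rw [heq]
  exact ⟨hgen.1.inter (hwall.1.inter hray.1),
    hgen.2.inter_of_isOpen_left (hwall.2.inter_of_isOpen_left hray.2 hwall.1) hgen.1⟩

lemma fanCoeff_eq_of_isTransverse (h : IsUnimodularSurface M) {ξ ξ' : Fin 3 → ℝ}
    (hξ : IsGeneric M ξ) (hT : IsTransverse M ξ ξ') (m : Fin 3 → ℤ) :
    fanCoeff M ξ m = fanCoeff M ξ' m := by
  have hcone : ∀ t ∈ M, coneCoeff ξ m t.1 t.2.1 t.2.2 - coneCoeff ξ' m t.1 t.2.1 t.2.2 =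
      wallJump ξ ξ' m t.2.1 t.2.2 + wallJump ξ ξ' m t.2.2 t.1 + wallJump ξ ξ' m t.1 t.2.1 := by
    rintro ⟨a, b, c⟩ ht
    have ht' := h.rotate ht
    have ht'' := h.rotate ht'
    exact coneCoeff_sub_coneCoeff (h.triple_product_eq_one ht) m (hT.wallForm_ne ht')
      (hT.wallForm_ne ht'') (hT.wallForm_ne ht) (hT.cross_dotProduct_ne ht)
      (hT.cross_dotProduct_ne ht') (hT.cross_dotProduct_ne ht'')
  have hjump : ∑ t ∈ M, wallJump ξ ξ' m t.1 t.2.1 = 0 :=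
    h.sum_eq_zero_of_adjacent (fun a b _ ↦ wallJump ξ ξ' m a b) fun a b _ _ ht _ ↦ by
      rw [wallJump_swap m (hξ ht) (hT.isGeneric ht), add_neg_cancel]
  have hrotate : ∑ t ∈ M, wallJump ξ ξ' m t.2.2 t.1 = ∑ t ∈ M, wallJump ξ ξ' m t.2.1 t.2.2 :=
    h.sum_rotate fun _ b c ↦ wallJump ξ ξ' m b c
  have hrotate' : ∑ t ∈ M, wallJump ξ ξ' m t.2.1 t.2.2 = ∑ t ∈ M, wallJump ξ ξ' m t.1 t.2.1 :=
    h.sum_rotate fun a b _ ↦ wallJump ξ ξ' m a b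
  rw [← sub_eq_zero, fanCoeff, fanCoeff, ← Finset.sum_sub_distrib, Finset.sum_congr rfl hcone,
    Finset.sum_add_distrib, Finset.sum_add_distrib, hrotate, hrotate', hjump, add_zero, add_zero]

lemma fanCoeff_eq_of_isGeneric (h : IsUnimodularSurface M) {ξ ξ' : Fin 3 → ℝ}
    (hξ : IsGeneric M ξ) (hξ' : IsGeneric M ξ') (m : Fin 3 → ℤ) :
    fanCoeff M ξ m = fanCoeff M ξ' m := by
  have hT := h.isOpen_and_dense_setOf_isTransverse hξ
  have hT' := h.isOpen_and_dense_setOf_isTransverse hξ'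
  obtain ⟨ξ'', h₁, h₂⟩ := (hT.2.inter_of_isOpen_left hT'.2 hT.1).nonempty
  rw [h.fanCoeff_eq_of_isTransverse hξ h₁, h.fanCoeff_eq_of_isTransverse hξ' h₂]

lemma coneCoeff_eq_zero {a b c : Fin 3 → ℤ} (h : a ⨯₃ b ⬝ᵥ c = 1) {ξ : Fin 3 → ℝ}
    {m : Fin 3 → ℤ} (hm : coeLat m ⬝ᵥ ξ < 0) : coneCoeff ξ m a b c = 0 := by
  by_contra hne
  rw [coneCoeff, ← ne_eq, mul_ne_zero_iff, mul_ne_zero_iff] at hne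
  have hx := mul_nonneg_of_geomCoeff_ne_zero hne.1.1
  have hy := mul_nonneg_of_geomCoeff_ne_zero hne.1.2
  have hz := mul_nonneg_of_geomCoeff_ne_zero hne.2
  linarith [coeLat_dotProduct_eq_of_unimodular h m ξ]

lemma fanCoeff_eq_zero (h : IsUnimodularSurface M) {ξ : Fin 3 → ℝ} (hξ : IsGeneric M ξ)
    {m : Fin 3 → ℤ} (hm : m ≠ 0) : fanCoeff M ξ m = 0 := by
  have hopen : IsOpen {ξ : Fin 3 → ℝ | coeLat m ⬝ᵥ ξ < 0} :=
    isOpen_lt (by fun_prop) continuous_const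
  have hneg : coeLat m ⬝ᵥ -coeLat m < 0 := by
    have hpos : m ⬝ᵥ m ≠ 0 := fun h₀ ↦ hm (dotProduct_self_eq_zero.1 h₀)
    rw [dotProduct_neg, coeLat_dotProduct_coeLat, neg_lt_zero]
    exact_mod_cast (Finset.sum_nonneg fun i _ ↦ mul_self_nonneg (m i)).lt_of_ne' hpos
  obtain ⟨ξ', hξ', hlt⟩ := h.isOpen_and_dense_setOf_isGeneric.2.exists_mem_open hopen ⟨_, hneg⟩
  rw [h.fanCoeff_eq_of_isGeneric hξ hξ', fanCoeff]
  exact Finset.sum_eq_zero fun t ht ↦ coneCoeff_eq_zero (h.triple_product_eq_one ht) hlt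

end IsUnimodularSurface

end FanCoeff

/-! ### Generating functions -/

section GeneratingFunction

/-- The function `1 / (1 - e^{-x})`, the Todd class divided by `x`. -/
def toddQuot (x : ℝ) : ℝ := (1 - Real.exp (-x))⁻¹

lemma one_sub_exp_neg_ne_zero {x : ℝ} (hx : x ≠ 0) : 1 - Real.exp (-x) ≠ 0 := by
  rw [sub_ne_zero, ne_comm, Ne, Real.exp_eq_one_iff]
  exact neg_ne_zero.2 hx

lemma toddQuot_neg {x : ℝ} (hx : x ≠ 0) : toddQuot (-x) = 1 - toddQuot x := by
  have h := one_sub_exp_neg_ne_zero hx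
  have h' := one_sub_exp_neg_ne_zero (neg_ne_zero.2 hx)
  have hmul : Real.exp x * Real.exp (-x) = 1 := by
    rw [← Real.exp_add, add_neg_cancel, Real.exp_zero]
  rw [neg_neg] at h'
  rw [toddQuot, toddQuot, neg_neg]
  field_simp
  linear_combination -hmul

lemma hasSum_geomCoeff {x : ℝ} (hx : x ≠ 0) :
    HasSum (fun k : ℤ ↦ geomCoeff x k * Real.exp (-(x * k))) (toddQuot x) := by
  have hneg (n : ℕ) : -((n : ℤ) + 1) < 0 := by omega
  rcases hx.lt_or_gt with h | h
  · have hgeom := (hasSum_geometric_of_lt_one (Real.exp_nonneg x)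
      (Real.exp_lt_one_iff.2 h)).mul_left (-Real.exp x)
    have htodd : toddQuot x = 0 + -Real.exp x * (1 - Real.exp x)⁻¹ := by
      have hrefl := toddQuot_neg hx
      rw [toddQuot, neg_neg] at hrefl
      have hne := one_sub_exp_neg_ne_zero (neg_ne_zero.2 hx)
      rw [neg_neg] at hne
      rw [← sub_sub_cancel 1 (toddQuot x), ← hrefl]
      field_simp
      ring
    rw [htodd]
    refine HasSum.of_nat_of_neg_add_one (hasSum_zero.congr_fun fun n ↦ ?_)
      (hgeom.congr_fun fun n ↦ ?_)
    · simp [geomCoeff, posIndicator, h.not_gt]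
    · simp only [geomCoeff, posIndicator, h.not_gt, hneg n, if_true, if_false]
      rw [← Real.exp_nat_mul, mul_comm (-Real.exp x), mul_neg, ← Real.exp_add]
      push_cast
      ring_nf
  · have hgeom := hasSum_geometric_of_lt_one (Real.exp_nonneg (-x))
      (Real.exp_lt_one_iff.2 (neg_lt_zero.2 h))
    rw [toddQuot, ← add_zero (_ : ℝ)⁻¹]
    refine HasSum.of_nat_of_neg_add_one (hgeom.congr_fun fun n ↦ ?_)
      (hasSum_zero.congr_fun fun n ↦ ?_)
    · simp [geomCoeff, posIndicator, h, ← Real.exp_nat_mul, mul_comm]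
    · simp only [geomCoeff, posIndicator, h, hneg n, if_true, sub_self, zero_mul]

lemma hasSum_mul_of_real {ι κ : Type*} {f : ι → ℝ} {g : κ → ℝ} {s t : ℝ} (hf : HasSum f s)
    (hg : HasSum g t) : HasSum (fun p : ι × κ ↦ f p.1 * g p.2) (s * t) :=
  hf.mul hg (summable_mul_of_summable_norm hf.summable.norm hg.summable.norm)

lemma hasSum_coneCoeff {a b c : Fin 3 → ℤ} (h : a ⨯₃ b ⬝ᵥ c = 1) {ξ : Fin 3 → ℝ}
    (hbc : wallForm b c ξ ≠ 0) (hca : wallForm c a ξ ≠ 0) (hab : wallForm a b ξ ≠ 0) :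
    HasSum (fun m : Fin 3 → ℤ ↦ coneCoeff ξ m a b c * Real.exp (-(coeLat m ⬝ᵥ ξ)))
      (toddQuot (wallForm b c ξ) * toddQuot (wallForm c a ξ) * toddQuot (wallForm a b ξ)) := by
  have hprod := hasSum_mul_of_real (hasSum_geomCoeff hbc)
    (hasSum_mul_of_real (hasSum_geomCoeff hca) (hasSum_geomCoeff hab))
  rw [← (Equiv.ofBijective _ (bijective_dotProduct_of_isUnit (h ▸ isUnit_one))).hasSum_iff,
    ← mul_assoc] at hprod
  refine hprod.congr_fun fun m ↦ ?_
  have hexp : -(coeLat m ⬝ᵥ ξ) = -(wallForm b c ξ * (m ⬝ᵥ a : ℤ)) +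
      (-(wallForm c a ξ * (m ⬝ᵥ b : ℤ)) + -(wallForm a b ξ * (m ⬝ᵥ c : ℤ))) := by
    rw [coeLat_dotProduct_eq_of_unimodular h]
    ring
  rw [hexp, Real.exp_add, Real.exp_add, coneCoeff]
  simp only [Function.comp_apply, Equiv.ofBijective_apply]
  ring

namespace IsUnimodularSurface

variable {M : Finset ((Fin 3 → ℤ) × (Fin 3 → ℤ) × (Fin 3 → ℤ))}

lemma sum_toddQuot_eq_fanCoeff (h : IsUnimodularSurface M) {ξ : Fin 3 → ℝ} (hξ : IsGeneric M ξ) :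
    ∑ t ∈ M, toddQuot (wallForm t.2.1 t.2.2 ξ) * toddQuot (wallForm t.2.2 t.1 ξ) *
      toddQuot (wallForm t.1 t.2.1 ξ) = fanCoeff M ξ 0 := by
  have hsum : HasSum (fun m : Fin 3 → ℤ ↦ fanCoeff M ξ m * Real.exp (-(coeLat m ⬝ᵥ ξ)))
      (∑ t ∈ M, toddQuot (wallForm t.2.1 t.2.2 ξ) * toddQuot (wallForm t.2.2 t.1 ξ) *
        toddQuot (wallForm t.1 t.2.1 ξ)) := by
    simp only [fanCoeff, Finset.sum_mul]
    exact hasSum_sum fun t ht ↦ hasSum_coneCoeff (h.triple_product_eq_one ht) (hξ (h.rotate ht))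
      (hξ (h.rotate (h.rotate ht))) (hξ ht)
  have hzero := hasSum_single (f := fun m ↦ fanCoeff M ξ m * Real.exp (-(coeLat m ⬝ᵥ ξ))) 0
    fun m hm ↦ by rw [h.fanCoeff_eq_zero hξ hm, zero_mul]
  rw [hsum.unique hzero, coeLat_zero, zero_dotProduct, neg_zero, Real.exp_zero, mul_one]

end IsUnimodularSurface

end GeneratingFunction

/-! ### Letting the generic point tend to zero -/

section Asymptotics

open Topology

lemma tendsto_exp_neg_numerator :
    Tendsto (fun t : ℝ ↦ ((t + 2) * Real.exp (-t) + t - 2) / t ^ 3) (𝓝[≠] 0) (𝓝 6⁻¹) := by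
  have hneg : Tendsto (fun t : ℝ ↦ -t) (𝓝[≠] 0) (𝓝 0) :=
    (continuous_neg.tendsto' 0 0 neg_zero).mono_left nhdsWithin_le_nhds
  have hrem := (((Real.exp_sub_sum_range_succ_isLittleO_pow 3).comp_tendsto
    hneg).tendsto_div_nhds_zero).neg
  have hlin : Tendsto (fun t : ℝ ↦ t + 2) (𝓝[≠] 0) (𝓝 2) :=
    (Continuous.tendsto' (by fun_prop) 0 2 (zero_add 2)).mono_left nhdsWithin_le_nhds
  have hpoly : Tendsto (fun t : ℝ ↦ 6⁻¹ - t / 6) (𝓝[≠] 0) (𝓝 6⁻¹) :=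
    (Continuous.tendsto' (by fun_prop) 0 _ (by norm_num)).mono_left nhdsWithin_le_nhds
  have hlim := (hlin.mul hrem).add hpoly
  rw [neg_zero, mul_zero, zero_add] at hlim
  refine hlim.congr' ?_
  filter_upwards [self_mem_nhdsWithin] with t (ht : t ≠ 0)
  simp only [Function.comp_apply, Finset.sum_range_succ, Finset.sum_range_zero, Nat.factorial]
  field_simp
  push_cast
  ring

lemma tendsto_div_one_sub_exp_neg :
    Tendsto (fun t : ℝ ↦ t / (1 - Real.exp (-t))) (𝓝[≠] 0) (𝓝 1) := by
  have hderiv : HasDerivAt (fun t : ℝ ↦ 1 - Real.exp (-t)) 1 0 := by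
    simpa using ((hasDerivAt_neg (0 : ℝ)).exp).const_sub 1
  simpa [slope_fun_def_field, Function.comp_def] using hderiv.tendsto_slope.inv₀ one_ne_zero

/-- The function `x ↦ (1 / (1 - e^{-x}) - 1 / 2 - 1 / x) / x`, so that
`1 / (1 - e^{-x}) = 1 / x + 1 / 2 + x * toddRem x`. -/
def toddRem (x : ℝ) : ℝ := (toddQuot x - 1 / 2 - 1 / x) / x

lemma toddQuot_sub_half {x : ℝ} (hx : x ≠ 0) : toddQuot x - 1 / 2 = 1 / x + x * toddRem x := by
  rw [toddRem]
  field_simp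
  ring

lemma tendsto_toddRem : Tendsto toddRem (𝓝[≠] 0) (𝓝 12⁻¹) := by
  have hlim := (tendsto_exp_neg_numerator.mul tendsto_div_one_sub_exp_neg).div_const 2
  rw [show (6⁻¹ * 1 / 2 : ℝ) = 12⁻¹ by norm_num] at hlim
  refine hlim.congr' ?_
  filter_upwards [self_mem_nhdsWithin] with t (ht : t ≠ 0)
  have := one_sub_exp_neg_ne_zero ht
  rw [toddRem, toddQuot]
  field_simp
  ring

lemma tendsto_toddQuot_mul_toddQuot {x y : ℝ} (hx : x ≠ 0) (hy : y ≠ 0) :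
    Tendsto (fun s : ℝ ↦ (toddQuot (s * x) - 1 / 2) * (toddQuot (s * y) - 1 / 2) -
      (x * y)⁻¹ / s ^ 2) (𝓝[≠] 0) (𝓝 ((x / y + y / x) / 12)) := by
  have hrem : ∀ {w : ℝ}, w ≠ 0 → Tendsto (fun s ↦ toddRem (s * w)) (𝓝[≠] 0) (𝓝 12⁻¹) :=
    fun {w} hw ↦ tendsto_toddRem.comp <| tendsto_nhdsWithin_of_tendsto_nhds_of_eventually_within _
      ((Continuous.tendsto' (by fun_prop) 0 0 (zero_mul w)).mono_left nhdsWithin_le_nhds) <| by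
        filter_upwards [self_mem_nhdsWithin] with s hs using mul_ne_zero hs hw
  have hsq : Tendsto (fun s : ℝ ↦ s ^ 2) (𝓝[≠] 0) (𝓝 0) :=
    (Continuous.tendsto' (by fun_prop) 0 0 (by simp)).mono_left nhdsWithin_le_nhds
  have hlim := (((hrem hx).const_mul (x / y)).add ((hrem hy).const_mul (y / x))).add
    (((hsq.mul_const (x * y)).mul (hrem hx)).mul (hrem hy))
  have hval : x / y * 12⁻¹ + y / x * 12⁻¹ + 0 * (x * y) * 12⁻¹ * 12⁻¹ = (x / y + y / x) / 12 := by
    ring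
  rw [hval] at hlim
  refine hlim.congr' ?_
  filter_upwards [self_mem_nhdsWithin] with s (hs : s ≠ 0)
  rw [toddQuot_sub_half (mul_ne_zero hs hx), toddQuot_sub_half (mul_ne_zero hs hy)]
  field_simp
  ring

lemma eq_of_forall_div_sq_add_eq {A B K : ℝ} {r : ℝ → ℝ} (hr : Tendsto r (𝓝[≠] 0) (𝓝 B))
    (h : ∀ s ≠ 0, A / s ^ 2 + r s = K) : B = K := by
  have hsq : Tendsto (fun s : ℝ ↦ s ^ 2) (𝓝[≠] 0) (𝓝 0) :=
    (Continuous.tendsto' (by fun_prop) 0 0 (by simp)).mono_left nhdsWithin_le_nhds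
  have hA : Tendsto (fun s : ℝ ↦ s ^ 2 * (K - r s)) (𝓝[≠] 0) (𝓝 A) := by
    refine tendsto_const_nhds.congr' ?_
    filter_upwards [self_mem_nhdsWithin] with s (hs : s ≠ 0)
    rw [← h s hs]
    field_simp
    ring
  have hA₀ : A = 0 := by
    simpa using tendsto_nhds_unique hA (hsq.mul (hr.const_sub K))
  refine tendsto_nhds_unique hr (tendsto_const_nhds.congr' ?_)
  filter_upwards [self_mem_nhdsWithin] with s (hs : s ≠ 0)
  rw [← h s hs, hA₀, zero_div, zero_add]

lemma toddQuot_mul_add_toddQuot_neg_mul {x y z : ℝ} (hx : x ≠ 0) (hy : y ≠ 0) (hz : z ≠ 0) :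
    toddQuot x * toddQuot y * toddQuot z + toddQuot (-x) * toddQuot (-y) * toddQuot (-z) =
      1 / 4 + (toddQuot x - 1 / 2) * (toddQuot y - 1 / 2) +
        (toddQuot y - 1 / 2) * (toddQuot z - 1 / 2) +
        (toddQuot z - 1 / 2) * (toddQuot x - 1 / 2) := by
  rw [toddQuot_neg hx, toddQuot_neg hy, toddQuot_neg hz]
  ring

lemma tendsto_toddQuot_even {x y z : ℝ} (hx : x ≠ 0) (hy : y ≠ 0) (hz : z ≠ 0) :
    Tendsto (fun s : ℝ ↦ toddQuot (s * x) * toddQuot (s * y) * toddQuot (s * z) +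
      toddQuot (-(s * x)) * toddQuot (-(s * y)) * toddQuot (-(s * z)) -
      ((x * y)⁻¹ + (y * z)⁻¹ + (z * x)⁻¹) / s ^ 2) (𝓝[≠] 0)
      (𝓝 ((x + y + z) * (x⁻¹ + y⁻¹ + z⁻¹) / 12)) := by
  have hlim := (((tendsto_toddQuot_mul_toddQuot hx hy).add
    (tendsto_toddQuot_mul_toddQuot hy hz)).add (tendsto_toddQuot_mul_toddQuot hz hx)).const_add
    (1 / 4)
  have hval : (x + y + z) * (x⁻¹ + y⁻¹ + z⁻¹) / 12 =
      1 / 4 + ((x / y + y / x) / 12 + (y / z + z / y) / 12 + (z / x + x / z) / 12) := by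
    field_simp
    ring
  rw [hval]
  refine hlim.congr' ?_
  filter_upwards [self_mem_nhdsWithin] with s (hs : s ≠ 0)
  rw [toddQuot_mul_add_toddQuot_neg_mul (mul_ne_zero hs hx) (mul_ne_zero hs hy)
    (mul_ne_zero hs hz)]
  ring

namespace IsUnimodularSurface

variable {M : Finset ((Fin 3 → ℤ) × (Fin 3 → ℤ) × (Fin 3 → ℤ))}

lemma sum_wallForm_add_mul_inv_add (h : IsUnimodularSurface M) {ξ : Fin 3 → ℝ}
    (hξ : IsGeneric M ξ) :
    ∑ t ∈ M, (wallForm t.2.1 t.2.2 ξ + wallForm t.2.2 t.1 ξ + wallForm t.1 t.2.1 ξ) *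
      ((wallForm t.2.1 t.2.2 ξ)⁻¹ + (wallForm t.2.2 t.1 ξ)⁻¹ + (wallForm t.1 t.2.1 ξ)⁻¹) =
    24 * fanCoeff M ξ 0 := by
  have hlim := tendsto_finsetSum M fun t ht ↦ tendsto_toddQuot_even (hξ (h.rotate ht))
    (hξ (h.rotate (h.rotate ht))) (hξ ht)
  have heq := eq_of_forall_div_sq_add_eq (K := 2 * fanCoeff M ξ 0)
    (A := ∑ t ∈ M, ((wallForm t.2.1 t.2.2 ξ * wallForm t.2.2 t.1 ξ)⁻¹ +
      (wallForm t.2.2 t.1 ξ * wallForm t.1 t.2.1 ξ)⁻¹ +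
      (wallForm t.1 t.2.1 ξ * wallForm t.2.1 t.2.2 ξ)⁻¹)) hlim fun s hs ↦ by
    have hpos := h.sum_toddQuot_eq_fanCoeff (hξ.smul hs)
    have hneg := h.sum_toddQuot_eq_fanCoeff (hξ.smul hs).neg
    rw [h.fanCoeff_eq_of_isGeneric (hξ.smul hs) hξ] at hpos
    rw [h.fanCoeff_eq_of_isGeneric (hξ.smul hs).neg hξ] at hneg
    simp only [wallForm_neg, wallForm_smul] at hpos hneg
    rw [Finset.sum_sub_distrib, ← Finset.sum_div, add_sub_cancel, Finset.sum_add_distrib, hpos,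
      hneg, two_mul]
  rw [← Finset.sum_div, div_eq_iff (by norm_num)] at heq
  linarith

lemma sum_wallForm_add_div (h : IsUnimodularSurface M) {ξ : Fin 3 → ℝ} (hξ : IsGeneric M ξ) :
    ∑ t ∈ M, (wallForm t.2.1 t.2.2 ξ + wallForm t.2.2 t.1 ξ + wallForm t.1 t.2.1 ξ) /
      wallForm t.1 t.2.1 ξ = 8 * fanCoeff M ξ 0 := by
  have hrotate := h.sum_rotate fun a b c ↦
    (wallForm b c ξ + wallForm c a ξ + wallForm a b ξ) / wallForm a b ξ
  have hrotate' := h.sum_rotate fun a b c ↦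
    (wallForm c a ξ + wallForm a b ξ + wallForm b c ξ) / wallForm b c ξ
  have hsum := h.sum_wallForm_add_mul_inv_add hξ
  simp only [mul_add, Finset.sum_add_distrib, ← div_eq_mul_inv] at hsum
  have hbc : ∑ t ∈ M, (wallForm t.2.1 t.2.2 ξ + wallForm t.2.2 t.1 ξ + wallForm t.1 t.2.1 ξ) /
      wallForm t.2.1 t.2.2 ξ = ∑ t ∈ M, (wallForm t.2.1 t.2.2 ξ + wallForm t.2.2 t.1 ξ +
        wallForm t.1 t.2.1 ξ) / wallForm t.1 t.2.1 ξ := by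
    rw [← hrotate]
    exact Finset.sum_congr rfl fun t _ ↦ by ring
  have hca : ∑ t ∈ M, (wallForm t.2.1 t.2.2 ξ + wallForm t.2.2 t.1 ξ + wallForm t.1 t.2.1 ξ) /
      wallForm t.2.2 t.1 ξ = ∑ t ∈ M, (wallForm t.2.1 t.2.2 ξ + wallForm t.2.2 t.1 ξ +
        wallForm t.1 t.2.1 ξ) / wallForm t.2.1 t.2.2 ξ := by
    refine Eq.trans (Finset.sum_congr rfl fun t _ ↦ ?_)
      (hrotate'.trans (Finset.sum_congr rfl fun t _ ↦ ?_)) <;> ring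
  linarith

end IsUnimodularSurface

end Asymptotics

/-! ### Lattice points of reflexive polytopes -/

section Reflexive

variable {d : ℕ}

lemma mem_polarDual {P : Set (Fin d → ℝ)} {y : Fin d → ℝ} :
    y ∈ polarDual P ↔ ∀ x ∈ P, -1 ≤ y ⬝ᵥ x := Iff.rfl

lemma convex_setOf_le_dotProduct (y : Fin d → ℝ) (s : ℝ) : Convex ℝ {x | s ≤ y ⬝ᵥ x} :=
  convex_halfSpace_ge (dotProductBilin ℝ ℝ y).isLinear s

lemma IsLatticePolytope.convex {P : Set (Fin d → ℝ)} (h : IsLatticePolytope P) : Convex ℝ P := by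
  obtain ⟨V, rfl⟩ := h
  exact convex_convexHull ℝ _

lemma IsLatticePolytope.isCompact {P : Set (Fin d → ℝ)} (h : IsLatticePolytope P) :
    IsCompact P := by
  obtain ⟨V, rfl⟩ := h
  exact (V.finite_toSet.image _).isCompact_convexHull (𝕜 := ℝ)

lemma finite_latticePoints {S : Set (Fin d → ℝ)} (hS : Bornology.IsBounded S) :
    (latticePoints S).Finite := by
  obtain ⟨R, hR⟩ := hS.exists_norm_le
  refine (Set.finite_Icc (fun _ ↦ -⌈R⌉) fun _ ↦ ⌈R⌉).subset fun n hn ↦ ?_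
  have habs : ∀ i, |n i| ≤ ⌈R⌉ := fun i ↦ by
    have hle : |(n i : ℝ)| ≤ ⌈R⌉ :=
      ((norm_le_pi_norm (coeLat n) i).trans (hR _ hn)).trans (Int.le_ceil R)
    exact_mod_cast hle
  exact ⟨fun i ↦ (abs_le.1 (habs i)).1, fun i ↦ (abs_le.1 (habs i)).2⟩

/-- The properties of the set of nonzero lattice points of a reflexive polytope on which the
construction of a unimodular triangulation rests: the polytope they span contains the origin in its
interior, the vertices of its dual are lattice points, and it contains no further nonzero lattice
points. A vertex of the dual is a point `u` determined by the constraints tight at `u`. -/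
structure IsReflexiveConfiguration (V : Finset (Fin d → ℤ)) : Prop where
  exists_dotProduct_neg : ∀ {n : Fin d → ℝ}, n ≠ 0 → ∃ v ∈ V, n ⬝ᵥ coeLat v < 0
  exists_eq_coeLat : ∀ {u : Fin d → ℝ}, (∀ v ∈ V, -1 ≤ u ⬝ᵥ coeLat v) →
    (∀ w : Fin d → ℝ, (∀ v ∈ V, u ⬝ᵥ coeLat v = -1 → w ⬝ᵥ coeLat v = -1) → w = u) →
    ∃ m, u = coeLat m
  mem_of_mem_convexHull : ∀ {p}, p ≠ 0 → coeLat p ∈ convexHull ℝ (coeLat '' (V : Set (Fin d → ℤ))) →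
    p ∈ V

namespace IsReflexive

variable {Δ : Set (Fin d → ℝ)}

/-- The finite set of nonzero lattice points of a reflexive polytope. These are the lattice points
of its boundary. -/
def nonzeroPoints (hΔ : IsReflexive Δ) : Finset (Fin d → ℤ) :=
  (finite_latticePoints hΔ.1.isCompact.isBounded).toFinset.erase 0

lemma mem_nonzeroPoints (hΔ : IsReflexive Δ) {p : Fin d → ℤ} :
    p ∈ hΔ.nonzeroPoints ↔ p ≠ 0 ∧ coeLat p ∈ Δ := by
  simp [nonzeroPoints, latticePoints]

lemma subset_of_forall_nonzeroPoints_mem (hΔ : IsReflexive Δ) {C : Set (Fin d → ℝ)}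
    (hC : Convex ℝ C) (hzero : 0 ∈ C) (hmem : ∀ v ∈ hΔ.nonzeroPoints, coeLat v ∈ C) : Δ ⊆ C := by
  obtain ⟨V, hV⟩ := hΔ.1
  rw [hV]
  refine convexHull_min ?_ hC
  rintro _ ⟨p, hp, rfl⟩
  by_cases hp₀ : p = 0
  · rwa [hp₀, coeLat_zero]
  · refine hmem p (hΔ.mem_nonzeroPoints.2 ⟨hp₀, ?_⟩)
    rw [hV]
    exact subset_convexHull ℝ _ ⟨p, hp, rfl⟩

lemma mem_polarDual_iff (hΔ : IsReflexive Δ) {y : Fin d → ℝ} :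
    y ∈ polarDual Δ ↔ ∀ v ∈ hΔ.nonzeroPoints, -1 ≤ y ⬝ᵥ coeLat v :=
  ⟨fun hy _ hv ↦ hy _ (hΔ.mem_nonzeroPoints.1 hv).2, fun hy ↦
    hΔ.subset_of_forall_nonzeroPoints_mem (C := {x | -1 ≤ y ⬝ᵥ x})
      (convex_setOf_le_dotProduct y (-1)) (by simp) hy⟩

lemma exists_dotProduct_neg (hΔ : IsReflexive Δ) {n : Fin d → ℝ} (hn : n ≠ 0) :
    ∃ v ∈ hΔ.nonzeroPoints, n ⬝ᵥ coeLat v < 0 := by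
  by_contra! hnonneg
  have hsub := hΔ.subset_of_forall_nonzeroPoints_mem (convex_setOf_le_dotProduct n 0) (by simp)
    hnonneg
  have hcont : Continuous fun t : ℝ ↦ t • n := by fun_prop
  have hmem : ∀ᶠ t in nhdsWithin (0 : ℝ) (Set.Iio 0), t • n ∈ Δ :=
    nhdsWithin_le_nhds <| hcont.continuousAt.eventually_mem <| by
      simpa using mem_interior_iff_mem_nhds.1 hΔ.2.1
  obtain ⟨t, htΔ, ht⟩ := (hmem.and self_mem_nhdsWithin).exists
  have hle : 0 ≤ t * (n ⬝ᵥ n) := by simpa using hsub htΔ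
  have hpos : 0 < n ⬝ᵥ n := by simpa using Matrix.dotProduct_star_self_pos_iff.2 hn
  exact hle.not_gt (mul_neg_of_neg_of_pos ht hpos)

lemma exists_eq_coeLat (hΔ : IsReflexive Δ) {u : Fin d → ℝ} (hu : u ∈ polarDual Δ)
    (hvertex : ∀ w : Fin d → ℝ,
      (∀ v ∈ hΔ.nonzeroPoints, u ⬝ᵥ coeLat v = -1 → w ⬝ᵥ coeLat v = -1) → w = u) :
    ∃ m, u = coeLat m := by
  have hextreme : u ∈ (polarDual Δ).extremePoints ℝ := by
    refine ⟨hu, fun x hx y hy hseg ↦ hvertex x fun v hv htight ↦ ?_⟩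
    obtain ⟨s, t, hs, ht, hst, rfl⟩ := hseg
    rw [add_dotProduct, smul_dotProduct, smul_dotProduct, smul_eq_mul, smul_eq_mul] at htight
    have hxv := hΔ.mem_polarDual_iff.1 hx v hv
    have hyv := hΔ.mem_polarDual_iff.1 hy v hv
    nlinarith
  obtain ⟨W, hW⟩ := hΔ.2.2
  rw [hW] at hextreme
  obtain ⟨m, -, hm⟩ := extremePoints_convexHull_subset hextreme
  exact ⟨m, hm.symm⟩

lemma isReflexiveConfiguration (hΔ : IsReflexive Δ) :
    IsReflexiveConfiguration hΔ.nonzeroPoints where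
  exists_dotProduct_neg := hΔ.exists_dotProduct_neg
  exists_eq_coeLat hu := hΔ.exists_eq_coeLat (hΔ.mem_polarDual_iff.2 hu)
  mem_of_mem_convexHull hp hmem := hΔ.mem_nonzeroPoints.2 ⟨hp, convexHull_min
    (by rintro _ ⟨v, hv, rfl⟩; exact (hΔ.mem_nonzeroPoints.1 hv).2) hΔ.1.convex hmem⟩

end IsReflexive

end Reflexive

/-! ### Regular triangulations -/

section Heights

/-- The squared Euclidean norm of a lattice vector, as a real number. -/
def latticeNormSq (v : Fin 3 → ℤ) : ℝ := coeLat v ⬝ᵥ coeLat v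

/-- The determinant of the four vectors `a, b, c, d` lifted by their heights. It is positive if and
only if the lift of `d` lies above the linear function interpolating the heights at `a, b, c`,
provided that `(a, b, c)` is positively oriented. -/
def liftedDet (a b c d : Fin 3 → ℤ) : ((Fin 3 → ℤ) → ℝ) →L[ℝ] ℝ :=
  wallForm a b (coeLat c) • ContinuousLinearMap.proj d -
    wallForm b c (coeLat d) • ContinuousLinearMap.proj a -
    wallForm c a (coeLat d) • ContinuousLinearMap.proj b -
    wallForm a b (coeLat d) • ContinuousLinearMap.proj c

lemma liftedDet_apply (a b c d : Fin 3 → ℤ) (l : (Fin 3 → ℤ) → ℝ) :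
    liftedDet a b c d l = wallForm a b (coeLat c) * l d - wallForm b c (coeLat d) * l a -
      wallForm c a (coeLat d) * l b - wallForm a b (coeLat d) * l c := rfl

lemma liftedDet_eq {a b c : Fin 3 → ℤ} {l : (Fin 3 → ℤ) → ℝ} {u : Fin 3 → ℝ}
    (ha : u ⬝ᵥ coeLat a = -l a) (hb : u ⬝ᵥ coeLat b = -l b) (hc : u ⬝ᵥ coeLat c = -l c)
    (d : Fin 3 → ℤ) :
    liftedDet a b c d l = wallForm a b (coeLat c) * (u ⬝ᵥ coeLat d + l d) := by
  rw [liftedDet_apply, mul_add, wallForm_mul_dotProduct, ha, hb, hc]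
  ring

/-- Under the heights `1 + ε |v|²`, with `ε > 0` small, `d` lies below the linear function
interpolating the heights at `a, b, c`. -/
def LiftsBelow (a b c d : Fin 3 → ℤ) : Prop :=
  liftedDet a b c d 1 < 0 ∨ liftedDet a b c d 1 = 0 ∧ liftedDet a b c d latticeNormSq < 0

/-- Heights whose regular triangulation refines the boundary complex of the convex hull of `V`,
uses every point of `V`, and consists of triangles. -/
structure IsAdmissibleHeight (V : Finset (Fin 3 → ℤ)) (l : (Fin 3 → ℤ) → ℝ) : Prop where
  pos : ∀ v ∈ V, 0 < l v
  liftedDet_neg : ∀ {a b c d}, a ∈ V → b ∈ V → c ∈ V → d ∈ V → LiftsBelow a b c d →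
    liftedDet a b c d l < 0
  liftedDet_ne_zero : ∀ {a b c d}, a ∈ V → b ∈ V → c ∈ V → d ∈ V → a ⨯₃ b ⬝ᵥ c ≠ 0 →
    d ≠ a → d ≠ b → d ≠ c → liftedDet a b c d l ≠ 0

lemma LiftsBelow.eventually_liftedDet_neg {a b c d : Fin 3 → ℤ} (h : LiftsBelow a b c d) :
    ∀ᶠ ε in nhdsWithin (0 : ℝ) (Set.Ioi 0), liftedDet a b c d (1 + ε • latticeNormSq) < 0 := by
  rcases h with hneg | ⟨hzero, hneg⟩
  · have hcont : Continuous fun ε : ℝ ↦ liftedDet a b c d (1 + ε • latticeNormSq) := by fun_prop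
    exact (hcont.continuousAt.eventually_lt continuousAt_const
      (by simpa using hneg)).filter_mono nhdsWithin_le_nhds
  · filter_upwards [self_mem_nhdsWithin] with ε hε
    rw [map_add, map_smul, hzero, zero_add]
    exact mul_neg_of_pos_of_neg hε hneg

lemma liftedDet_ne_zero {a b c d : Fin 3 → ℤ} (hdet : a ⨯₃ b ⬝ᵥ c ≠ 0) (ha : d ≠ a) (hb : d ≠ b)
    (hc : d ≠ c) : liftedDet a b c d ≠ 0 := fun h ↦ hdet <| by
  have happly := DFunLike.congr_fun h (Pi.single d 1)
  rw [liftedDet_apply, Pi.single_eq_same, Pi.single_eq_of_ne ha.symm, Pi.single_eq_of_ne hb.symm,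
    Pi.single_eq_of_ne hc.symm, wallForm_coeLat] at happly
  simpa using happly

lemma exists_isAdmissibleHeight (V : Finset (Fin 3 → ℤ)) : ∃ l, IsAdmissibleHeight V l := by
  classical
  let below := (V ×ˢ V ×ˢ V ×ˢ V).filter fun t ↦ LiftsBelow t.1 t.2.1 t.2.2.1 t.2.2.2
  let independent := (V ×ˢ V ×ˢ V ×ˢ V).filter fun t ↦ t.1 ⨯₃ t.2.1 ⬝ᵥ t.2.2.1 ≠ 0 ∧
    t.2.2.2 ≠ t.1 ∧ t.2.2.2 ≠ t.2.1 ∧ t.2.2.2 ≠ t.2.2.1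
  let U : Set ((Fin 3 → ℤ) → ℝ) := (⋂ v ∈ V, {l | 0 < l v}) ∩
    ⋂ t ∈ below, {l | liftedDet t.1 t.2.1 t.2.2.1 t.2.2.2 l < 0}
  have hU : IsOpen U :=
    (isOpen_biInter_finset fun v _ ↦ isOpen_lt continuous_const (continuous_apply v)).inter
      (isOpen_biInter_finset fun t _ ↦ isOpen_lt (map_continuous _) continuous_const)
  have hU_nonempty : U.Nonempty := by
    have hpos : ∀ᶠ ε in nhdsWithin (0 : ℝ) (Set.Ioi 0), ∀ v ∈ V,
        0 < ((1 : (Fin 3 → ℤ) → ℝ) + ε • latticeNormSq) v := by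
      filter_upwards [self_mem_nhdsWithin] with ε hε v _
      have hsq : 0 ≤ latticeNormSq v := by
        unfold latticeNormSq dotProduct
        exact Finset.sum_nonneg fun i _ ↦ mul_self_nonneg _
      exact add_pos_of_pos_of_nonneg one_pos (mul_nonneg (le_of_lt hε) hsq)
    have hneg := (Filter.eventually_all_finset below).2 fun t ht ↦
      (Finset.mem_filter.1 ht).2.eventually_liftedDet_neg
    obtain ⟨ε, hεpos, hεneg⟩ := (hpos.and hneg).exists
    exact ⟨_, Set.mem_iInter₂.2 hεpos, Set.mem_iInter₂.2 hεneg⟩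
  obtain ⟨l, ⟨hl_pos, hl_neg⟩, hl_ne⟩ := (isOpen_and_dense_setOf_forall_apply_ne independent
    (fun t ↦ liftedDet t.1 t.2.1 t.2.2.1 t.2.2.2) 0 fun t ht ↦ by
      obtain ⟨-, hdet, h₁, h₂, h₃⟩ := Finset.mem_filter.1 ht
      exact liftedDet_ne_zero hdet h₁ h₂ h₃).2.inter_open_nonempty U hU hU_nonempty
  refine ⟨l, Set.mem_iInter₂.1 hl_pos, fun {a b c d} ha hb hc hd h ↦ ?_,
    fun {a b c d} ha hb hc hd hdet h₁ h₂ h₃ ↦ ?_⟩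
  · exact Set.mem_iInter₂.1 hl_neg (a, b, c, d) (by simp [below, *])
  · exact hl_ne (a, b, c, d) (by simp [independent, *])

end Heights

section Triangulation

variable {V : Finset (Fin 3 → ℤ)} {l : (Fin 3 → ℤ) → ℝ}

/-- The points of `V` at which the linear form `u` takes the value minus the height. -/
def tightSet (V : Finset (Fin 3 → ℤ)) (l : (Fin 3 → ℤ) → ℝ) (u : Fin 3 → ℝ) :
    Finset (Fin 3 → ℤ) :=
  V.filter fun v ↦ u ⬝ᵥ coeLat v = -l v

/-- The linear form `-u` lies below the heights on `V`. -/
def IsFeasible (V : Finset (Fin 3 → ℤ)) (l : (Fin 3 → ℤ) → ℝ) (u : Fin 3 → ℝ) : Prop :=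
  ∀ v ∈ V, -l v ≤ u ⬝ᵥ coeLat v

open Classical in
/-- The positively oriented triangles of the subdivision of the boundary of the convex hull of `V`
induced by the lower hull of the heights `l`. -/
def regularTriangulation (V : Finset (Fin 3 → ℤ)) (l : (Fin 3 → ℤ) → ℝ) :
    Finset ((Fin 3 → ℤ) × (Fin 3 → ℤ) × (Fin 3 → ℤ)) :=
  (V ×ˢ V ×ˢ V).filter fun t ↦ 0 < t.1 ⨯₃ t.2.1 ⬝ᵥ t.2.2 ∧ ∃ u, IsFeasible V l u ∧
    t.1 ∈ tightSet V l u ∧ t.2.1 ∈ tightSet V l u ∧ t.2.2 ∈ tightSet V l u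

lemma mem_tightSet {u : Fin 3 → ℝ} {v : Fin 3 → ℤ} :
    v ∈ tightSet V l u ↔ v ∈ V ∧ u ⬝ᵥ coeLat v = -l v :=
  Finset.mem_filter

lemma mem_regularTriangulation {a b c : Fin 3 → ℤ} : (a, b, c) ∈ regularTriangulation V l ↔
    0 < a ⨯₃ b ⬝ᵥ c ∧ ∃ u, IsFeasible V l u ∧
      a ∈ tightSet V l u ∧ b ∈ tightSet V l u ∧ c ∈ tightSet V l u := by
  simp only [regularTriangulation, Finset.mem_filter, Finset.mem_product, and_iff_right_iff_imp]
  rintro ⟨-, u, -, ha, hb, hc⟩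
  exact ⟨(mem_tightSet.1 ha).1, (mem_tightSet.1 hb).1, (mem_tightSet.1 hc).1⟩

lemma wallForm_coeLat_pos {a b c : Fin 3 → ℤ} :
    0 < wallForm a b (coeLat c) ↔ 0 < a ⨯₃ b ⬝ᵥ c := by
  rw [wallForm_coeLat, Int.cast_pos]

lemma mem_of_mem_regularTriangulation {a b c : Fin 3 → ℤ}
    (h : (a, b, c) ∈ regularTriangulation V l) : a ∈ V ∧ b ∈ V ∧ c ∈ V := by
  obtain ⟨-, u, -, ha, hb, hc⟩ := mem_regularTriangulation.1 h
  exact ⟨(mem_tightSet.1 ha).1, (mem_tightSet.1 hb).1, (mem_tightSet.1 hc).1⟩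

lemma IsAdmissibleHeight.eq_of_mem_tightSet (hl : IsAdmissibleHeight V l) {u : Fin 3 → ℝ}
    {a b c d : Fin 3 → ℤ} (hdet : a ⨯₃ b ⬝ᵥ c ≠ 0) (ha : a ∈ tightSet V l u)
    (hb : b ∈ tightSet V l u) (hc : c ∈ tightSet V l u) (hd : d ∈ tightSet V l u) :
    d = a ∨ d = b ∨ d = c := by
  rw [mem_tightSet] at ha hb hc hd
  by_contra! hne
  refine hl.liftedDet_ne_zero ha.1 hb.1 hc.1 hd.1 hdet hne.1 hne.2.1 hne.2.2 ?_
  rw [liftedDet_eq ha.2 hb.2 hc.2, hd.2, neg_add_cancel, mul_zero]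

lemma IsAdmissibleHeight.not_liftsBelow (hl : IsAdmissibleHeight V l) {a b c d : Fin 3 → ℤ}
    (h : (a, b, c) ∈ regularTriangulation V l) (hd : d ∈ V) : ¬LiftsBelow a b c d := fun hbelow ↦ by
  obtain ⟨hdet, u, hu, ha, hb, hc⟩ := mem_regularTriangulation.1 h
  rw [mem_tightSet] at ha hb hc
  have hneg := hl.liftedDet_neg ha.1 hb.1 hc.1 hd hbelow
  rw [liftedDet_eq ha.2 hb.2 hc.2] at hneg
  exact hneg.not_ge (mul_nonneg (wallForm_coeLat_pos.2 hdet).le (by linarith [hu d hd]))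

lemma exists_integral_support (hV : IsReflexiveConfiguration V) (hl : IsAdmissibleHeight V l)
    {a b c : Fin 3 → ℤ} (h : (a, b, c) ∈ regularTriangulation V l) :
    ∃ m : Fin 3 → ℤ, m ⬝ᵥ a = -1 ∧ m ⬝ᵥ b = -1 ∧ m ⬝ᵥ c = -1 ∧ ∀ v ∈ V, -1 ≤ m ⬝ᵥ v := by
  obtain ⟨haV, hbV, hcV⟩ := mem_of_mem_regularTriangulation h
  have hdet := wallForm_coeLat_pos.2 (mem_regularTriangulation.1 h).1
  obtain ⟨hinj, hsurj⟩ := bijective_dotProduct_of_isUnit (R := ℝ) (a := coeLat a) (b := coeLat b)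
    (c := coeLat c) (by rw [← coeLat_cross]; exact hdet.ne'.isUnit)
  obtain ⟨w, hw⟩ := hsurj (-1, -1, -1)
  simp only [Prod.mk.injEq] at hw
  have hfeas : ∀ v ∈ V, -1 ≤ w ⬝ᵥ coeLat v := fun v hv ↦ by
    by_contra! hlt
    refine hl.not_liftsBelow h hv (Or.inl ?_)
    rw [liftedDet_eq hw.1 hw.2.1 hw.2.2, Pi.one_apply]
    exact mul_neg_of_pos_of_neg hdet (by linarith)
  obtain ⟨m, rfl⟩ := hV.exists_eq_coeLat hfeas fun w' hw' ↦ hinj <| by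
    simp only [hw' a haV hw.1, hw' b hbV hw.2.1, hw' c hcV hw.2.2, hw]
  simp only [coeLat_dotProduct_coeLat] at hw hfeas
  exact ⟨m, by exact_mod_cast hw.1, by exact_mod_cast hw.2.1, by exact_mod_cast hw.2.2,
    fun v hv ↦ by exact_mod_cast hfeas v hv⟩

end Triangulation

section Unimodular

variable {V : Finset (Fin 3 → ℤ)} {l : (Fin 3 → ℤ) → ℝ}

lemma mem_of_triple_products_nonneg (hV : IsReflexiveConfiguration V)
    {a b c p : Fin 3 → ℤ}
    (h : (a, b, c) ∈ regularTriangulation V l) (hx : 0 ≤ b ⨯₃ c ⬝ᵥ p) (hy : 0 ≤ c ⨯₃ a ⬝ᵥ p)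
    (hz : 0 ≤ a ⨯₃ b ⬝ᵥ p)
    (hsum : b ⨯₃ c ⬝ᵥ p + c ⨯₃ a ⬝ᵥ p + a ⨯₃ b ⬝ᵥ p = a ⨯₃ b ⬝ᵥ c) : p ∈ V := by
  obtain ⟨haV, hbV, hcV⟩ := mem_of_mem_regularTriangulation h
  have hdet := (mem_regularTriangulation.1 h).1
  refine hV.mem_of_mem_convexHull ?_ ?_
  · rintro rfl
    simp only [dotProduct_zero, add_zero] at hsum
    exact hdet.ne hsum
  · have hdet' : (0 : ℝ) < (a ⨯₃ b ⬝ᵥ c : ℤ) := Int.cast_pos.2 hdet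
    refine mem_convexHull_of_exists_fintype
      (fun i ↦ ((![b ⨯₃ c ⬝ᵥ p, c ⨯₃ a ⬝ᵥ p, a ⨯₃ b ⬝ᵥ p] i : ℤ) / (a ⨯₃ b ⬝ᵥ c : ℤ) : ℝ))
      ![coeLat a, coeLat b, coeLat c] (fun i ↦ ?_) ?_ (fun i ↦ ?_) ?_
    · exact div_nonneg (Int.cast_nonneg (by fin_cases i <;> assumption)) hdet'.le
    · rw [← Finset.sum_div, ← Int.cast_sum, div_eq_one_iff_eq hdet'.ne', ← hsum, Fin.sum_univ_three]
      rfl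
    · fin_cases i
      exacts [⟨a, haV, rfl⟩, ⟨b, hbV, rfl⟩, ⟨c, hcV, rfl⟩]
    · have hp := triple_product_smul (coeLat a) (coeLat b) (coeLat c) (coeLat p)
      simp only [← coeLat_cross, coeLat_dotProduct_coeLat] at hp
      rw [← inv_smul_smul₀ hdet'.ne' (coeLat p), hp]
      simp [Fin.sum_univ_three, smul_smul, div_eq_inv_mul]

lemma eq_vertex_of_triple_products_nonneg (hV : IsReflexiveConfiguration V)
    (hl : IsAdmissibleHeight V l) {a b c p : Fin 3 → ℤ}
    (h : (a, b, c) ∈ regularTriangulation V l) (hx : 0 ≤ b ⨯₃ c ⬝ᵥ p) (hy : 0 ≤ c ⨯₃ a ⬝ᵥ p)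
    (hz : 0 ≤ a ⨯₃ b ⬝ᵥ p)
    (hsum : b ⨯₃ c ⬝ᵥ p + c ⨯₃ a ⬝ᵥ p + a ⨯₃ b ⬝ᵥ p = a ⨯₃ b ⬝ᵥ c) :
    p = a ∨ p = b ∨ p = c := by
  have hp := mem_of_triple_products_nonneg hV h hx hy hz hsum
  have hdet := (mem_regularTriangulation.1 h).1
  obtain ⟨hab, hbc, hca⟩ := pairwise_ne_of_triple_product_ne_zero hdet.ne'
  have hflat : liftedDet a b c p 1 = 0 := by
    simp only [liftedDet_apply, wallForm_coeLat, Pi.one_apply, ← hsum]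
    push_cast
    ring
  have hconv : 0 ≤ liftedDet a b c p latticeNormSq :=
    not_lt.1 fun hneg ↦ hl.not_liftsBelow h hp (Or.inr ⟨hflat, hneg⟩)
  have hle : b ⨯₃ c ⬝ᵥ p * a ⬝ᵥ a + c ⨯₃ a ⬝ᵥ p * b ⬝ᵥ b + a ⨯₃ b ⬝ᵥ p * c ⬝ᵥ c -
      a ⨯₃ b ⬝ᵥ c * p ⬝ᵥ p ≤ 0 := by
    simp only [liftedDet_apply, wallForm_coeLat, latticeNormSq, coeLat_dotProduct_coeLat] at hconv
    norm_cast at hconv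
    linarith
  have hpos : ∀ {v w : Fin 3 → ℤ}, v ≠ w → 0 < (v - w) ⬝ᵥ (v - w) := fun hvw ↦ by
    simpa using Matrix.dotProduct_star_self_pos_iff.2 (sub_ne_zero.2 hvw)
  have hnormSq := triple_product_mul_normSq hsum
  have hxy := mul_nonneg (mul_nonneg hx hy) (hpos hab).le
  have hyz := mul_nonneg (mul_nonneg hy hz) (hpos hbc).le
  have hxz := mul_nonneg (mul_nonneg hx hz) (hpos hca.symm).le
  have hle' := mul_nonpos_of_nonneg_of_nonpos hdet.le hle
  refine eq_vertex_of_triple_products_mul_eq_zero hdet.ne' hsum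
    ((mul_eq_zero_iff_right (hpos hab).ne').1 (le_antisymm (by linarith) hxy))
    ((mul_eq_zero_iff_right (hpos hbc).ne').1 (le_antisymm (by linarith) hyz))
    ((mul_eq_zero_iff_right (hpos hca.symm).ne').1 (le_antisymm (by linarith) hxz))

lemma exists_triple_products_eq_emod (a b c x : Fin 3 → ℤ) : ∃ p,
    b ⨯₃ c ⬝ᵥ p = b ⨯₃ c ⬝ᵥ x % a ⨯₃ b ⬝ᵥ c ∧ c ⨯₃ a ⬝ᵥ p = c ⨯₃ a ⬝ᵥ x % a ⨯₃ b ⬝ᵥ c ∧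
      a ⨯₃ b ⬝ᵥ p = a ⨯₃ b ⬝ᵥ x % a ⨯₃ b ⬝ᵥ c := by
  refine ⟨x - (b ⨯₃ c ⬝ᵥ x / a ⨯₃ b ⬝ᵥ c) • a - (c ⨯₃ a ⬝ᵥ x / a ⨯₃ b ⬝ᵥ c) • b -
    (a ⨯₃ b ⬝ᵥ x / a ⨯₃ b ⬝ᵥ c) • c, ?_, ?_, ?_⟩ <;>
  simp only [dotProduct_sub, dotProduct_smul, smul_eq_mul, cross_dotProduct_left,
    cross_dotProduct_right, triple_product_rotate b c a, triple_product_rotate a b c,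
    Int.emod_def] <;>
  ring

lemma triple_products_eq_zero_of_lt (hV : IsReflexiveConfiguration V)
    (hl : IsAdmissibleHeight V l) {a b c p : Fin 3 → ℤ}
    (h : (a, b, c) ∈ regularTriangulation V l) (hx : 0 ≤ b ⨯₃ c ⬝ᵥ p) (hy : 0 ≤ c ⨯₃ a ⬝ᵥ p)
    (hz : 0 ≤ a ⨯₃ b ⬝ᵥ p) (hx' : b ⨯₃ c ⬝ᵥ p < a ⨯₃ b ⬝ᵥ c) (hy' : c ⨯₃ a ⬝ᵥ p < a ⨯₃ b ⬝ᵥ c)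
    (hz' : a ⨯₃ b ⬝ᵥ p < a ⨯₃ b ⬝ᵥ c) :
    b ⨯₃ c ⬝ᵥ p = 0 ∧ c ⨯₃ a ⬝ᵥ p = 0 ∧ a ⨯₃ b ⬝ᵥ p = 0 := by
  obtain ⟨m, hma, hmb, hmc, -⟩ := exists_integral_support hV hl h
  have hbca := triple_product_rotate a b c
  have hcab := (triple_product_rotate b c a).trans hbca
  have hvertex : ∀ q, 0 ≤ b ⨯₃ c ⬝ᵥ q → 0 ≤ c ⨯₃ a ⬝ᵥ q → 0 ≤ a ⨯₃ b ⬝ᵥ q →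
      b ⨯₃ c ⬝ᵥ q + c ⨯₃ a ⬝ᵥ q + a ⨯₃ b ⬝ᵥ q = a ⨯₃ b ⬝ᵥ c →
      b ⨯₃ c ⬝ᵥ q = a ⨯₃ b ⬝ᵥ c ∨ c ⨯₃ a ⬝ᵥ q = a ⨯₃ b ⬝ᵥ c ∨ a ⨯₃ b ⬝ᵥ q = a ⨯₃ b ⬝ᵥ c :=
    fun q hx hy hz hsum ↦ by
      rcases eq_vertex_of_triple_products_nonneg hV hl h hx hy hz hsum with rfl | rfl | rfl
      exacts [Or.inl hbca, Or.inr (Or.inl hcab), Or.inr (Or.inr rfl)]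
  have hlevel := triple_product_mul_dotProduct a b c p m
  rw [hma, hmb, hmc] at hlevel
  have hlevel_nonpos : m ⬝ᵥ p ≤ 0 := by nlinarith
  have hlevel_gt : -3 < m ⬝ᵥ p := by nlinarith
  obtain hm | hm | hm : m ⬝ᵥ p = 0 ∨ m ⬝ᵥ p = -1 ∨ m ⬝ᵥ p = -2 := by omega
  all_goals rw [hm] at hlevel
  · omega
  · have := hvertex p hx hy hz (by omega)
    omega
  · have := hvertex (a + b + c - p)
    simp only [dotProduct_sub, dotProduct_add, cross_dotProduct_left, cross_dotProduct_right, hbca,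
      hcab] at this
    omega

theorem triple_product_eq_one (hV : IsReflexiveConfiguration V) (hl : IsAdmissibleHeight V l)
    {a b c : Fin 3 → ℤ} (h : (a, b, c) ∈ regularTriangulation V l) : a ⨯₃ b ⬝ᵥ c = 1 := by
  have hdet := (mem_regularTriangulation.1 h).1
  refine (Int.isUnit_iff.1 (isUnit_triple_product_of_forall_dvd hdet.ne' fun x ↦ ?_)).resolve_right
    fun hneg ↦ by omega
  obtain ⟨p, hx, hy, hz⟩ := exists_triple_products_eq_emod a b c x
  have hzero := triple_products_eq_zero_of_lt hV hl h (p := p)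
  simp only [hx, hy, hz, Int.emod_nonneg _ hdet.ne', Int.emod_lt_of_pos _ hdet, true_implies,
    ← Int.dvd_iff_emod_eq_zero] at hzero
  exact hzero

end Unimodular

section Surface

variable {V : Finset (Fin 3 → ℤ)} {l : (Fin 3 → ℤ) → ℝ} {u u' n : Fin 3 → ℝ}

lemma mem_tightSet_add_smul {v : Fin 3 → ℤ} (hv : v ∈ tightSet V l u) (hn : n ⬝ᵥ coeLat v = 0)
    (t : ℝ) : v ∈ tightSet V l (u + t • n) := by
  rw [mem_tightSet] at hv ⊢
  rw [add_dotProduct, smul_dotProduct, hn, smul_zero, add_zero]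
  exact hv

-- The ratio test of the simplex algorithm.
lemma IsFeasible.exists_pivot (hu : IsFeasible V l u) (hn : ∃ v ∈ V, n ⬝ᵥ coeLat v < 0) :
    ∃ t : ℝ, IsFeasible V l (u + t • n) ∧ ∃ d ∈ tightSet V l (u + t • n), n ⬝ᵥ coeLat d < 0 := by
  have hne : (V.filter fun v ↦ n ⬝ᵥ coeLat v < 0).Nonempty := by
    simpa only [Finset.Nonempty, Finset.mem_filter] using hn
  obtain ⟨d, hd, hmin⟩ := Finset.exists_min_image _
    (fun v ↦ (u ⬝ᵥ coeLat v + l v) / -(n ⬝ᵥ coeLat v)) hne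
  obtain ⟨hdV, hdn⟩ := Finset.mem_filter.1 hd
  refine ⟨(u ⬝ᵥ coeLat d + l d) / -(n ⬝ᵥ coeLat d), fun v hv ↦ ?_, d, ?_, hdn⟩
  · have ht : 0 ≤ (u ⬝ᵥ coeLat d + l d) / -(n ⬝ᵥ coeLat d) :=
      div_nonneg (by linarith [hu d hdV]) (by linarith)
    rw [add_dotProduct, smul_dotProduct, smul_eq_mul]
    rcases lt_or_ge (n ⬝ᵥ coeLat v) 0 with hvn | hvn
    · have hratio := hmin v (Finset.mem_filter.2 ⟨hv, hvn⟩)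
      rw [le_div_iff₀ (by linarith)] at hratio
      linarith
    · linarith [hu v hv, mul_nonneg ht hvn]
  · refine mem_tightSet.2 ⟨hdV, ?_⟩
    rw [add_dotProduct, smul_dotProduct, smul_eq_mul]
    field_simp [hdn.ne]
    ring

lemma IsFeasible.exists_mem_regularTriangulation (hV : IsReflexiveConfiguration V)
    (hu : IsFeasible V l u) {a b : Fin 3 → ℤ} (ha : a ∈ tightSet V l u) (hb : b ∈ tightSet V l u)
    (hab : a ⨯₃ b ≠ 0) : ∃ d, (b, a, d) ∈ regularTriangulation V l := by
  have hn : coeLat (a ⨯₃ b) ≠ 0 := fun h ↦ hab (coeLat_injective (h.trans coeLat_zero.symm))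
  obtain ⟨t, hfeas, d, hd, hneg⟩ := hu.exists_pivot (hV.exists_dotProduct_neg hn)
  rw [coeLat_dotProduct_coeLat, Int.cast_lt_zero] at hneg
  refine ⟨d, mem_regularTriangulation.2 ⟨?_, _, hfeas, mem_tightSet_add_smul hb ?_ t,
    mem_tightSet_add_smul ha ?_ t, hd⟩⟩
  · rwa [cross_dotProduct_swap, neg_pos]
  · rw [coeLat_dotProduct_coeLat, cross_dotProduct_right, Int.cast_zero]
  · rw [coeLat_dotProduct_coeLat, cross_dotProduct_left, Int.cast_zero]

lemma regularTriangulation_nonempty (hV : IsReflexiveConfiguration V)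
    (hl : IsAdmissibleHeight V l) : (regularTriangulation V l).Nonempty := by
  have hfeas : IsFeasible V l 0 := fun v hv ↦ by
    rw [zero_dotProduct]
    exact neg_nonpos.2 (hl.pos v hv).le
  obtain ⟨t, hfeas, a, ha, haneg⟩ := hfeas.exists_pivot
    (hV.exists_dotProduct_neg (n := Pi.single 0 1) (by simp))
  have ha₀ : a 0 ≠ 0 := by
    simpa [coeLat] using haneg.ne
  have hn : coeLat (a ⨯₃ Pi.single 2 1) ≠ 0 := fun h ↦
    ha₀ (by simpa [coeLat, cross_apply] using congrFun h 1)
  obtain ⟨s, hfeas, b, hb, hbneg⟩ := hfeas.exists_pivot (hV.exists_dotProduct_neg hn)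
  have ha' := mem_tightSet_add_smul (n := coeLat (a ⨯₃ Pi.single 2 1)) ha
    (by rw [coeLat_dotProduct_coeLat, cross_dotProduct_left, Int.cast_zero]) s
  have hab : a ⨯₃ b ≠ 0 := fun h ↦ by
    rw [coeLat_dotProduct_coeLat, triple_product_rotate b, cross_dotProduct_swap, h,
      zero_dotProduct, neg_zero, Int.cast_zero] at hbneg
    exact lt_irrefl _ hbneg
  obtain ⟨d, hd⟩ := hfeas.exists_mem_regularTriangulation hV ha' hb hab
  exact ⟨_, hd⟩

lemma dotProduct_le_of_mem_tightSet {a b c : Fin 3 → ℤ} (hdet : 0 < a ⨯₃ b ⬝ᵥ c)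
    (ha : a ∈ tightSet V l u) (hb : b ∈ tightSet V l u) (hc : c ∈ tightSet V l u)
    (hu' : IsFeasible V l u') {ξ : Fin 3 → ℝ} (hx : 0 ≤ wallForm b c ξ) (hy : 0 ≤ wallForm c a ξ)
    (hz : 0 ≤ wallForm a b ξ) : u ⬝ᵥ ξ ≤ u' ⬝ᵥ ξ := by
  rw [mem_tightSet] at ha hb hc
  refine le_of_mul_le_mul_left ?_ (wallForm_coeLat_pos.2 hdet)
  rw [wallForm_mul_dotProduct, wallForm_mul_dotProduct, ha.2, hb.2, hc.2]
  gcongr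
  exacts [hu' a ha.1, hu' b hb.1, hu' c hc.1]

lemma apex_unique_of_mem_regularTriangulation (hl : IsAdmissibleHeight V l) {a b c d : Fin 3 → ℤ}
    (hc : (a, b, c) ∈ regularTriangulation V l) (hd : (a, b, d) ∈ regularTriangulation V l) :
    c = d := by
  obtain ⟨hc₀, u, hu, hau, hbu, hcu⟩ := mem_regularTriangulation.1 hc
  obtain ⟨hd₀, w, hw, haw, hbw, hdw⟩ := mem_regularTriangulation.1 hd
  obtain ⟨-, hbd, hda⟩ := pairwise_ne_of_triple_product_ne_zero hd₀.ne'
  suffices hd_tight : d ∈ tightSet V l u from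
    ((hl.eq_of_mem_tightSet hc₀.ne' hau hbu hcu hd_tight).resolve_left hda).resolve_left hbd.symm
      |>.symm
  rw [mem_tightSet] at *
  refine ⟨hdw.1, le_antisymm ?_ (hu d hdw.1)⟩
  have hcramer := wallForm_mul_dotProduct a b c (coeLat d) (w - u)
  simp only [sub_dotProduct, hau.2, hbu.2, hcu.2, haw.2, hbw.2, hdw.2, sub_self, mul_zero,
    zero_add] at hcramer
  have hright : 0 ≤ wallForm a b (coeLat d) * (w ⬝ᵥ coeLat c - -l c) :=
    mul_nonneg (wallForm_coeLat_pos.2 hd₀).le (sub_nonneg.2 (hw c hcu.1))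
  linarith [nonneg_of_mul_nonneg_right (hcramer ▸ hright) (wallForm_coeLat_pos.2 hc₀)]

theorem isUnimodularSurface_regularTriangulation (hV : IsReflexiveConfiguration V)
    (hl : IsAdmissibleHeight V l) : IsUnimodularSurface (regularTriangulation V l) where
  rotate {a b c} h := by
    obtain ⟨hdet, u, hu, ha, hb, hc⟩ := mem_regularTriangulation.1 h
    exact mem_regularTriangulation.2 ⟨by rwa [triple_product_rotate], u, hu, hb, hc, ha⟩
  exists_adjacent {a b c} h := by
    obtain ⟨hdet, u, hu, ha, hb, -⟩ := mem_regularTriangulation.1 h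
    refine hu.exists_mem_regularTriangulation hV ha hb fun h₀ ↦ ?_
    rw [h₀, zero_dotProduct] at hdet
    exact hdet.false
  apex_unique := apex_unique_of_mem_regularTriangulation hl
  triple_product_eq_one := triple_product_eq_one hV hl

end Surface

section Cover

/-- The interior of the cone spanned by a positively oriented triple. -/
def openCone (a b c : Fin 3 → ℤ) : Set (Fin 3 → ℝ) :=
  {ξ | 0 < wallForm b c ξ ∧ 0 < wallForm c a ξ ∧ 0 < wallForm a b ξ}

/-- The cone spanned by a positively oriented triple. -/
def closedCone (a b c : Fin 3 → ℤ) : Set (Fin 3 → ℝ) :=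
  {ξ | 0 ≤ wallForm b c ξ ∧ 0 ≤ wallForm c a ξ ∧ 0 ≤ wallForm a b ξ}

lemma continuous_wallForm (a b : Fin 3 → ℤ) : Continuous (wallForm a b) := by
  unfold wallForm
  fun_prop

lemma isOpen_openCone (a b c : Fin 3 → ℤ) : IsOpen (openCone a b c) :=
  (isOpen_lt continuous_const (continuous_wallForm _ _)).inter
    ((isOpen_lt continuous_const (continuous_wallForm _ _)).inter
      (isOpen_lt continuous_const (continuous_wallForm _ _)))

lemma isClosed_closedCone (a b c : Fin 3 → ℤ) : IsClosed (closedCone a b c) :=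
  (isClosed_le continuous_const (continuous_wallForm _ _)).inter
    ((isClosed_le continuous_const (continuous_wallForm _ _)).inter
      (isClosed_le continuous_const (continuous_wallForm _ _)))

lemma openCone_subset_closedCone (a b c : Fin 3 → ℤ) : openCone a b c ⊆ closedCone a b c :=
  fun _ h ↦ ⟨h.1.le, h.2.1.le, h.2.2.le⟩

lemma openCone_nonempty {a b c : Fin 3 → ℤ} (h : 0 < a ⨯₃ b ⬝ᵥ c) : (openCone a b c).Nonempty := by
  refine ⟨coeLat (a + b + c), ?_⟩
  simpa [openCone, wallForm_coeLat, dotProduct_add, cross_dotProduct_left, cross_dotProduct_right,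
    triple_product_rotate b c a, triple_product_rotate a b c] using h

open Classical in
lemma coneCoeff_zero (ξ : Fin 3 → ℝ) (a b c : Fin 3 → ℤ) :
    coneCoeff ξ 0 a b c = if ξ ∈ openCone a b c then 1 else 0 := by
  simp only [coneCoeff, geomCoeff, posIndicator, zero_dotProduct, lt_irrefl, if_false, sub_zero,
    openCone, Set.mem_ofPred_eq]
  by_cases hx : 0 < wallForm b c ξ <;> by_cases hy : 0 < wallForm c a ξ <;> simp [hx, hy]

open Classical in
lemma fanCoeff_zero_eq_card (M : Finset ((Fin 3 → ℤ) × (Fin 3 → ℤ) × (Fin 3 → ℤ)))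
    (ξ : Fin 3 → ℝ) : fanCoeff M ξ 0 = (M.filter fun t ↦ ξ ∈ openCone t.1 t.2.1 t.2.2).card := by
  simp only [fanCoeff, coneCoeff_zero, Finset.sum_boole]

lemma eq_rotation_of_triple_product_pos {R : Type*} [CommRing R] [LinearOrder R]
    [IsStrictOrderedRing R] {a b c a' b' c' : Fin 3 → R} (h : 0 < a ⨯₃ b ⬝ᵥ c)
    (h' : 0 < a' ⨯₃ b' ⬝ᵥ c') (ha : a' = a ∨ a' = b ∨ a' = c) (hb : b' = a ∨ b' = b ∨ b' = c)
    (hc : c' = a ∨ c' = b ∨ c' = c) :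
    (a', b', c') = (a, b, c) ∨ (a', b', c') = (b, c, a) ∨ (a', b', c') = (c, a, b) := by
  have hbca := triple_product_rotate a b c
  have hcab := (triple_product_rotate b c a).trans hbca
  have hbac := cross_dotProduct_swap a b c
  have hcba := cross_dotProduct_swap b c a
  have hacb := cross_dotProduct_swap c a b
  obtain ⟨hab, hbc, hca⟩ := pairwise_ne_of_triple_product_ne_zero h'.ne'
  rcases ha with rfl | rfl | rfl <;> rcases hb with rfl | rfl | rfl <;>
    rcases hc with rfl | rfl | rfl <;> first | contradiction | simp; done | (exfalso; linarith)

variable {V : Finset (Fin 3 → ℤ)} {l : (Fin 3 → ℤ) → ℝ} {ξ : Fin 3 → ℝ}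

lemma mem_tightSet_of_dotProduct_le {u u' : Fin 3 → ℝ} {a b c : Fin 3 → ℤ}
    (ha : a ∈ tightSet V l u) (hb : b ∈ tightSet V l u) (hc : c ∈ tightSet V l u)
    (hdet : 0 < a ⨯₃ b ⬝ᵥ c) (hu' : IsFeasible V l u') (hξ : ξ ∈ openCone a b c)
    (hle : u' ⬝ᵥ ξ ≤ u ⬝ᵥ ξ) : a ∈ tightSet V l u' ∧ b ∈ tightSet V l u' ∧ c ∈ tightSet V l u' := by
  simp only [mem_tightSet] at *
  obtain ⟨hx, hy, hz⟩ := hξ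
  have hle' := mul_le_mul_of_nonneg_left hle (wallForm_coeLat_pos.2 hdet).le
  rw [wallForm_mul_dotProduct, wallForm_mul_dotProduct, ha.2, hb.2, hc.2] at hle'
  have hxa := mul_le_mul_of_nonneg_left (hu' a ha.1) hx.le
  have hyb := mul_le_mul_of_nonneg_left (hu' b hb.1) hy.le
  have hzc := mul_le_mul_of_nonneg_left (hu' c hc.1) hz.le
  exact ⟨⟨ha.1, mul_left_cancel₀ hx.ne' (by linarith)⟩,
    ⟨hb.1, mul_left_cancel₀ hy.ne' (by linarith)⟩, hc.1, mul_left_cancel₀ hz.ne' (by linarith)⟩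

lemma eq_rotation_of_mem_openCone (hl : IsAdmissibleHeight V l) {a b c a' b' c' : Fin 3 → ℤ}
    (h : (a, b, c) ∈ regularTriangulation V l) (h' : (a', b', c') ∈ regularTriangulation V l)
    (hξ : ξ ∈ openCone a b c) (hξ' : ξ ∈ openCone a' b' c') :
    (a', b', c') = (a, b, c) ∨ (a', b', c') = (b, c, a) ∨ (a', b', c') = (c, a, b) := by
  obtain ⟨hdet, u, hu, ha, hb, hc⟩ := mem_regularTriangulation.1 h
  obtain ⟨hdet', u', hu', ha', hb', hc'⟩ := mem_regularTriangulation.1 h'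
  obtain ⟨hx, hy, hz⟩ := openCone_subset_closedCone _ _ _ hξ
  obtain ⟨ha'', hb'', hc''⟩ := mem_tightSet_of_dotProduct_le ha' hb' hc' hdet' hu hξ'
    (dotProduct_le_of_mem_tightSet hdet ha hb hc hu' hx hy hz)
  exact eq_rotation_of_triple_product_pos hdet hdet'
    (hl.eq_of_mem_tightSet hdet.ne' ha hb hc ha'') (hl.eq_of_mem_tightSet hdet.ne' ha hb hc hb'')
    (hl.eq_of_mem_tightSet hdet.ne' ha hb hc hc'')

lemma fanCoeff_zero_of_mem_openCone (hV : IsReflexiveConfiguration V)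
    (hl : IsAdmissibleHeight V l) {a b c : Fin 3 → ℤ} (h : (a, b, c) ∈ regularTriangulation V l)
    (hξ : ξ ∈ openCone a b c) : fanCoeff (regularTriangulation V l) ξ 0 = 3 := by
  classical
  have hT := isUnimodularSurface_regularTriangulation hV hl
  obtain ⟨hab, hbc, hca⟩ :=
    pairwise_ne_of_triple_product_ne_zero (mem_regularTriangulation.1 h).1.ne'
  have hfilter : (regularTriangulation V l).filter (fun t ↦ ξ ∈ openCone t.1 t.2.1 t.2.2) =
      {(a, b, c), (b, c, a), (c, a, b)} := by
    ext ⟨a', b', c'⟩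
    simp only [Finset.mem_filter, Finset.mem_insert, Finset.mem_singleton]
    refine ⟨fun h' ↦ eq_rotation_of_mem_openCone hl h h'.1 hξ h'.2, ?_⟩
    have h₁ := hT.rotate h
    have h₂ := hT.rotate h₁
    rintro (h | h | h) <;> obtain ⟨rfl, rfl, rfl⟩ := h <;> simp_all [openCone]
  rw [fanCoeff_zero_eq_card, hfilter, Finset.card_insert_of_notMem (by simp [hab, hca.symm]),
    Finset.card_pair (by simp [hbc])]
  norm_num

lemma fanCoeff_zero_eq_three (hV : IsReflexiveConfiguration V) (hl : IsAdmissibleHeight V l)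
    (hξ : IsGeneric (regularTriangulation V l) ξ) :
    fanCoeff (regularTriangulation V l) ξ 0 = 3 := by
  have hT := isUnimodularSurface_regularTriangulation hV hl
  obtain ⟨⟨a, b, c⟩, h⟩ := regularTriangulation_nonempty hV hl
  obtain ⟨ξ', hξ', hmem⟩ := hT.isOpen_and_dense_setOf_isGeneric.2.exists_mem_open
    (isOpen_openCone a b c) (openCone_nonempty (mem_regularTriangulation.1 h).1)
  rw [hT.fanCoeff_eq_of_isGeneric hξ hξ', fanCoeff_zero_of_mem_openCone hV hl h hmem]

theorem exists_mem_closedCone (hV : IsReflexiveConfiguration V) (hl : IsAdmissibleHeight V l)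
    (ξ : Fin 3 → ℝ) : ∃ a b c, (a, b, c) ∈ regularTriangulation V l ∧ ξ ∈ closedCone a b c := by
  classical
  have hT := isUnimodularSurface_regularTriangulation hV hl
  let C : Set (Fin 3 → ℝ) := ⋃ t ∈ regularTriangulation V l, closedCone t.1 t.2.1 t.2.2
  have hC : IsClosed C := isClosed_biUnion_finset fun _ _ ↦ isClosed_closedCone _ _ _
  have hsub : {ξ | IsGeneric (regularTriangulation V l) ξ} ⊆ C := fun ξ hξ ↦ by
    have hcard := fanCoeff_zero_eq_three hV hl hξ
    rw [fanCoeff_zero_eq_card] at hcard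
    obtain ⟨t, ht⟩ := Finset.card_pos.1 (by exact_mod_cast hcard ▸ three_pos (α := ℝ))
    obtain ⟨ht, hmem⟩ := Finset.mem_filter.1 ht
    exact Set.mem_biUnion ht (openCone_subset_closedCone _ _ _ hmem)
  have hξ := closure_minimal hsub hC (hT.isOpen_and_dense_setOf_isGeneric.2 ξ)
  obtain ⟨⟨a, b, c⟩, h, hmem⟩ := Set.mem_iUnion₂.1 hξ
  exact ⟨a, b, c, h, hmem⟩

end Cover

/-! ### Faces and dual faces -/

section Faces

variable {d : ℕ} {P S : Set (Fin d → ℝ)} {u v y : Fin d → ℝ}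

lemma mem_dualFace_pair :
    y ∈ dualFace P {u, v} ↔ y ∈ polarDual P ∧ y ⬝ᵥ u = -1 ∧ y ⬝ᵥ v = -1 := by
  refine and_congr_right fun _ ↦ ⟨fun hy ↦ ⟨hy u (by simp), hy v (by simp)⟩, ?_⟩
  rintro ⟨hu, hv⟩ x (rfl | rfl)
  exacts [hu, hv]

lemma convex_dualFace : Convex ℝ (dualFace P S) := by
  intro y hy z hz s t hs ht hst
  have hdot : ∀ x, (s • y + t • z) ⬝ᵥ x = s * (y ⬝ᵥ x) + t * (z ⬝ᵥ x) := fun x ↦ by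
    rw [add_dotProduct, smul_dotProduct, smul_dotProduct, smul_eq_mul, smul_eq_mul]
  refine ⟨fun x hx ↦ ?_, fun x hx ↦ ?_⟩
  · refine le_of_le_of_eq ?_ (hdot x).symm
    have hyx := mul_le_mul_of_nonneg_left (mem_polarDual.1 hy.1 x hx) hs
    have hzx := mul_le_mul_of_nonneg_left (mem_polarDual.1 hz.1 x hx) ht
    linarith
  · refine (hdot x).trans ?_
    rw [show y ⬝ᵥ x = -1 from hy.2 x hx, show z ⬝ᵥ x = -1 from hz.2 x hx]
    linarith

lemma isExposed_setOf_dotProduct_eq (hy : y ∈ polarDual P) :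
    IsExposed ℝ P {x ∈ P | y ⬝ᵥ x = -1} := by
  rintro ⟨x₀, hx₀, hyx₀⟩
  refine ⟨-(dotProductBilin ℝ ℝ y).toContinuousLinearMap, Set.ext fun x ↦
    and_congr_right fun hx ↦ ⟨fun hyx z hz ↦ ?_, fun hmax ↦ ?_⟩⟩
  · exact neg_le_neg (hyx.trans_le (hy z hz))
  · exact le_antisymm ((neg_le_neg_iff.1 (hmax x₀ hx₀)).trans hyx₀.le) (hy x hx)

lemma exists_mem_polarDual_of_isExposed {θ : Set (Fin d → ℝ)} (hP : 0 ∈ interior P)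
    (hθ : IsExposed ℝ P θ) (hne : θ.Nonempty) (hθP : θ ≠ P) :
    ∃ y ∈ polarDual P, θ = {x ∈ P | y ⬝ᵥ x = -1} := by
  obtain ⟨f, rfl⟩ := hθ hne
  obtain ⟨x₀, hx₀, hmax⟩ := hne
  have hpos : 0 < f x₀ := by
    by_contra! hle
    have hlocal : IsLocalMax f 0 := by
      filter_upwards [mem_interior_iff_mem_nhds.1 hP] with x hx
      simpa using (hmax x hx).trans hle
    have hf : f = 0 := hlocal.hasFDerivAt_eq_zero f.hasFDerivAt
    exact hθP (by simp [hf])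
  obtain ⟨n, hn⟩ : ∃ n : Fin d → ℝ, ∀ x, f x = n ⬝ᵥ x :=
    ⟨(dotProductEquiv ℝ (Fin d)).symm f, fun x ↦
      (LinearMap.congr_fun ((dotProductEquiv ℝ (Fin d)).apply_symm_apply (f : _ →ₗ[ℝ] ℝ)) x).symm⟩
  have hy : ∀ x, (-(f x₀)⁻¹ • n) ⬝ᵥ x = -(f x / f x₀) := fun x ↦ by
    rw [smul_dotProduct, ← hn, smul_eq_mul]
    ring
  refine ⟨-(f x₀)⁻¹ • n, fun x hx ↦ ?_, Set.ext fun x ↦ and_congr_right fun hx ↦ ?_⟩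
  · exact (neg_le_neg ((div_le_one hpos).2 (hmax x hx))).trans_eq (hy x).symm
  · rw [hy, neg_inj, div_eq_one_iff_eq hpos.ne']
    exact ⟨fun hx' ↦ le_antisymm (hmax x hx) (hx' x₀ hx₀), fun hx' z hz ↦ hx' ▸ hmax z hz⟩

lemma IsReflexive.exists_eq_setOf_dotProduct_eq {Δ θ : Set (Fin d → ℝ)} {k : ℕ}
    (hΔ : IsReflexive Δ) (hθ : IsFaceOfDim Δ k θ) (hk : dimSet Δ ≠ k) :
    ∃ y ∈ polarDual Δ, θ = {x ∈ Δ | y ⬝ᵥ x = -1} :=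
  exists_mem_polarDual_of_isExposed hΔ.2.1 hθ.1 hθ.2.1 fun h ↦ hk (h ▸ hθ.2.2)

/-- The smallest set containing `S` which is an intersection of faces `{x ∈ P | ⟨y, x⟩ = -1}` of
`P`. For a single edge it is the double dual of the edge. -/
def faceClosure (P S : Set (Fin d → ℝ)) : Set (Fin d → ℝ) :=
  {x ∈ P | ∀ y ∈ dualFace P S, y ⬝ᵥ x = -1}

lemma subset_faceClosure (hS : S ⊆ P) : S ⊆ faceClosure P S :=
  fun _ hx ↦ ⟨hS hx, fun _ hy ↦ hy.2 _ hx⟩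

lemma isExposed_faceClosure (h : dualFace P S = segment ℝ u v) :
    IsExposed ℝ P (faceClosure P S) := by
  have hu : u ∈ dualFace P S := h ▸ left_mem_segment ℝ u v
  have hv : v ∈ dualFace P S := h ▸ right_mem_segment ℝ u v
  have hinter : faceClosure P S = {x ∈ P | u ⬝ᵥ x = -1} ∩ {x ∈ P | v ⬝ᵥ x = -1} := by
    refine Set.Subset.antisymm (fun x hx ↦ ⟨⟨hx.1, hx.2 u hu⟩, hx.1, hx.2 v hv⟩) ?_
    rintro x ⟨⟨hxP, hxu⟩, -, hxv⟩
    refine ⟨hxP, fun y hy ↦ ?_⟩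
    rw [h] at hy
    obtain ⟨s, t, -, -, hst, rfl⟩ := hy
    rw [add_dotProduct, smul_dotProduct, smul_dotProduct, hxu, hxv, smul_eq_mul, smul_eq_mul]
    linarith
  rw [hinter]
  exact (isExposed_setOf_dotProduct_eq hu.1).inter (isExposed_setOf_dotProduct_eq hv.1)

lemma dimSet_eq_one_iff : dimSet S = 1 ↔ Collinear ℝ S ∧ S.Nontrivial := by
  rw [dimSet, direction_affineSpan, collinear_iff_finrank_le_one, ← Set.not_subsingleton_iff,
    ← vectorSpan_eq_bot_iff_subsingleton (k := ℝ), ← Submodule.finrank_eq_zero (R := ℝ)]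
  omega

lemma dotProduct_eq_of_collinear (hS : Collinear ℝ S) (hu : u ∈ S) (hv : v ∈ S) (huv : u ≠ v)
    {s : ℝ} (hyu : y ⬝ᵥ u = s) (hyv : y ⬝ᵥ v = s) {x : Fin d → ℝ} (hx : x ∈ S) : y ⬝ᵥ x = s := by
  obtain ⟨r, rfl⟩ := mem_affineSpan_pair_iff_exists_lineMap_eq.1
    (hS.mem_affineSpan_of_mem_of_ne hu hv hx huv)
  simp [AffineMap.lineMap_apply, hyu, hyv]

lemma dualFace_eq_of_collinear (hS : Collinear ℝ S) (hu : u ∈ S) (hv : v ∈ S) (huv : u ≠ v) :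
    dualFace P S = dualFace P {u, v} := by
  ext y
  rw [mem_dualFace_pair]
  exact and_congr_right fun _ ↦ ⟨fun hy ↦ ⟨hy u hu, hy v hv⟩, fun hy _ hx ↦
    dotProduct_eq_of_collinear hS hu hv huv hy.1 hy.2 hx⟩

lemma faceClosure_eq_of_collinear (hy : y ∈ polarDual P) (hS : S = {x ∈ P | y ⬝ᵥ x = -1})
    (hcol : Collinear ℝ S) (hu : u ∈ S) (hv : v ∈ S) (huv : u ≠ v) :
    faceClosure P {u, v} = S := by
  rw [faceClosure, ← dualFace_eq_of_collinear hcol hu hv huv]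
  ext x
  refine ⟨fun hx ↦ ?_, fun hx ↦ ⟨(hS ▸ hx : x ∈ {x ∈ P | y ⬝ᵥ x = -1}).1, fun z hz ↦ hz.2 x hx⟩⟩
  rw [hS]
  refine ⟨hx.1, hx.2 y ⟨hy, fun z hz ↦ ?_⟩⟩
  exact (hS ▸ hz : z ∈ {x ∈ P | y ⬝ᵥ x = -1}).2

lemma exists_injOn_apply (hS : Collinear ℝ S) (hS' : S.Nontrivial) :
    ∃ i, Set.InjOn (fun x : Fin d → ℝ ↦ x i) S := by
  obtain ⟨u, hu, v, hv, huv⟩ := hS'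
  obtain ⟨i, hi⟩ := Function.ne_iff.1 huv
  refine ⟨i, fun x hx z hz hxz ↦ ?_⟩
  obtain ⟨r, rfl⟩ := mem_affineSpan_pair_iff_exists_lineMap_eq.1
    (hS.mem_affineSpan_of_mem_of_ne hu hv hx huv)
  obtain ⟨s, rfl⟩ := mem_affineSpan_pair_iff_exists_lineMap_eq.1
    (hS.mem_affineSpan_of_mem_of_ne hu hv hz huv)
  simp only [AffineMap.lineMap_apply, vsub_eq_sub, vadd_eq_add, Pi.add_apply, Pi.smul_apply,
    Pi.sub_apply, smul_eq_mul, add_left_inj] at hxz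
  rw [mul_right_cancel₀ (sub_ne_zero.2 hi.symm) hxz]

lemma mem_segment_of_collinear (hS : Collinear ℝ S) {x : Fin d → ℝ} (hu : u ∈ S) (hv : v ∈ S)
    (hx : x ∈ S) {i : Fin d} (hux : u i < x i) (hxv : x i < v i) : x ∈ segment ℝ u v := by
  have huv : u ≠ v := fun h ↦ (hux.trans hxv).ne (congrFun h i)
  obtain ⟨r, rfl⟩ := mem_affineSpan_pair_iff_exists_lineMap_eq.1
    (hS.mem_affineSpan_of_mem_of_ne hu hv hx huv)
  simp only [AffineMap.lineMap_apply, vsub_eq_sub, vadd_eq_add, Pi.add_apply, Pi.smul_apply,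
    Pi.sub_apply, smul_eq_mul] at hux hxv
  rw [segment_eq_image_lineMap]
  exact ⟨r, ⟨by nlinarith, by nlinarith⟩, rfl⟩

end Faces

/-! ### Dual edges -/

section DualEdges

lemma segment_add_smul {E : Type*} [AddCommGroup E] [Module ℝ E] (x w : E) {k : ℝ} (hk : 0 ≤ k) :
    segment ℝ x (x + k • w) = (fun t : ℝ ↦ x + t • w) '' Set.Icc 0 k := by
  have h := image_segment ℝ (AffineMap.lineMap x (x + w)) 0 k
  rw [segment_eq_Icc hk] at h
  simpa [AffineMap.lineMap_apply, add_comm x] using h.symm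

lemma ncard_latticePoints_segment {d : ℕ} {w c : Fin d → ℤ} (hwc : w ⬝ᵥ c = 1) (m : Fin d → ℤ)
    (k : ℕ) :
    (latticePoints (segment ℝ (coeLat m) (coeLat m + (k : ℝ) • coeLat w))).ncard = k + 1 := by
  have hinj : Function.Injective fun j : ℕ ↦ m + (j : ℤ) • w := fun i j hij ↦ by
    have hdot := congrArg (· ⬝ᵥ c) hij
    simpa only [add_dotProduct, smul_dotProduct, hwc, smul_eq_mul, mul_one, add_right_inj,
      Nat.cast_inj] using hdot
  have himage : latticePoints (segment ℝ (coeLat m) (coeLat m + (k : ℝ) • coeLat w)) =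
      (fun j : ℕ ↦ m + (j : ℤ) • w) '' Finset.range (k + 1) := by
    rw [latticePoints, segment_add_smul _ _ k.cast_nonneg]
    ext n
    simp only [Set.mem_ofPred_eq, Set.mem_image, Set.mem_Icc, Finset.coe_range, Set.mem_Iio]
    constructor
    · rintro ⟨t, ht, hn⟩
      have ht_int : t = (n ⬝ᵥ c - m ⬝ᵥ c : ℤ) := by
        have hdot := congrArg (· ⬝ᵥ coeLat c) hn
        simp only [add_dotProduct, smul_dotProduct, coeLat_dotProduct_coeLat, hwc, smul_eq_mul,
          Int.cast_one, mul_one] at hdot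
        push_cast
        linarith
      generalize n ⬝ᵥ c - m ⬝ᵥ c = j at ht_int
      subst ht_int
      obtain ⟨hj₀, hjk⟩ : 0 ≤ j ∧ j ≤ k := by exact_mod_cast ht
      lift j to ℕ using hj₀
      exact ⟨j, by omega, coeLat_injective (by rw [coeLat_add, coeLat_zsmul, hn])⟩
    · rintro ⟨j, hj, rfl⟩
      exact ⟨j, ⟨j.cast_nonneg, by exact_mod_cast Nat.lt_succ_iff.1 hj⟩,
        by rw [coeLat_add, coeLat_zsmul, Int.cast_natCast]⟩
  rw [himage, Set.ncard_image_of_injective _ hinj, Set.ncard_coe_finset, Finset.card_range]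

variable {Δ : Set (Fin 3 → ℝ)} {l : (Fin 3 → ℤ) → ℝ}

lemma eq_add_smul_coeLat_cross {a b c m : Fin 3 → ℤ} {y : Fin 3 → ℝ} (h : a ⨯₃ b ⬝ᵥ c = 1)
    (ha : y ⬝ᵥ coeLat a = (m ⬝ᵥ a : ℤ)) (hb : y ⬝ᵥ coeLat b = (m ⬝ᵥ b : ℤ)) :
    y = coeLat m + (y ⬝ᵥ coeLat c - (m ⬝ᵥ c : ℤ)) • coeLat (a ⨯₃ b) := by
  rw [← coeLat_dotProduct_coeLat] at ha hb
  rw [← coeLat_dotProduct_coeLat, coeLat_cross]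
  refine eq_add_smul_cross ?_ ha hb
  rw [← coeLat_cross, coeLat_dotProduct_coeLat, h, Int.cast_one]

lemma exists_adjacent_supports {V : Finset (Fin 3 → ℤ)} (hV : IsReflexiveConfiguration V)
    (hl : IsAdmissibleHeight V l) {a b c d : Fin 3 → ℤ} (h : (a, b, c) ∈ regularTriangulation V l)
    (h' : (b, a, d) ∈ regularTriangulation V l) :
    ∃ (m : Fin 3 → ℤ) (k : ℕ), m ⬝ᵥ a = -1 ∧ m ⬝ᵥ b = -1 ∧ m ⬝ᵥ c = -1 ∧ m ⬝ᵥ d = k - 1 ∧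
      (∀ v ∈ V, -1 ≤ m ⬝ᵥ v) ∧ ∀ v ∈ V, -1 ≤ (m + (k : ℤ) • a ⨯₃ b) ⬝ᵥ v := by
  have hdet := triple_product_eq_one hV hl h
  have hdet' := triple_product_eq_one hV hl h'
  rw [cross_dotProduct_swap] at hdet'
  obtain ⟨m, ha, hb, hc, hm⟩ := exists_integral_support hV hl h
  obtain ⟨m', hb', ha', hd', hm'⟩ := exists_integral_support hV hl h'
  obtain ⟨k, hk⟩ : ∃ k : ℕ, m' ⬝ᵥ c - m ⬝ᵥ c = k := Int.eq_ofNat_of_zero_le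
    (by linarith [hm' c (mem_of_mem_regularTriangulation h).2.2])
  have heq := eq_add_smul_cross hdet (ha'.trans ha.symm) (hb'.trans hb.symm)
  rw [hk] at heq
  refine ⟨m, k, ha, hb, hc, ?_, hm, heq ▸ hm'⟩
  rw [heq, add_dotProduct, smul_dotProduct, smul_eq_mul] at hd'
  linear_combination hd' + k * hdet'

lemma exists_dualFace_pair_eq_segment (hΔ : IsReflexive Δ)
    (hl : IsAdmissibleHeight hΔ.nonzeroPoints l) {a b c d : Fin 3 → ℤ}
    (h : (a, b, c) ∈ regularTriangulation hΔ.nonzeroPoints l)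
    (h' : (b, a, d) ∈ regularTriangulation hΔ.nonzeroPoints l) :
    ∃ (m : Fin 3 → ℤ) (k : ℕ), m ⬝ᵥ a = -1 ∧ m ⬝ᵥ b = -1 ∧ m ⬝ᵥ c = -1 ∧ m ⬝ᵥ d = k - 1 ∧
      dualFace Δ {coeLat a, coeLat b} =
        segment ℝ (coeLat m) (coeLat m + (k : ℝ) • coeLat (a ⨯₃ b)) := by
  have hV := hΔ.isReflexiveConfiguration
  obtain ⟨m, k, ha, hb, hc, hd, hm, hm'⟩ := exists_adjacent_supports hV hl h h'
  have hcV := (mem_of_mem_regularTriangulation h).2.2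
  have hdV := (mem_of_mem_regularTriangulation h').2.2
  have hdet := triple_product_eq_one hV hl h
  have hdet' := triple_product_eq_one hV hl h'
  rw [cross_dotProduct_swap, neg_eq_iff_eq_neg] at hdet'
  have hmem : ∀ {n : Fin 3 → ℤ}, n ⬝ᵥ a = -1 → n ⬝ᵥ b = -1 →
      (∀ v ∈ hΔ.nonzeroPoints, -1 ≤ n ⬝ᵥ v) → coeLat n ∈ dualFace Δ {coeLat a, coeLat b} := by
    intro n ha hb hn
    simp only [mem_dualFace_pair, hΔ.mem_polarDual_iff, coeLat_dotProduct_coeLat]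
    exact ⟨fun v hv ↦ by exact_mod_cast hn v hv, by exact_mod_cast ha, by exact_mod_cast hb⟩
  refine ⟨m, k, ha, hb, hc, hd, Set.Subset.antisymm (fun y hy ↦ ?_) ?_⟩
  · rw [mem_dualFace_pair, hΔ.mem_polarDual_iff] at hy
    obtain ⟨hy, hya, hyb⟩ := hy
    have heq := eq_add_smul_coeLat_cross hdet (by rw [hya, ha]; simp) (by rw [hyb, hb]; simp)
    generalize y ⬝ᵥ coeLat c - (m ⬝ᵥ c : ℤ) = t at heq
    have hyc := hy c hcV
    have hyd := hy d hdV
    rw [heq, add_dotProduct, smul_dotProduct, smul_eq_mul, coeLat_dotProduct_coeLat,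
      coeLat_dotProduct_coeLat] at hyc hyd
    rw [hc, hdet] at hyc
    rw [hd, hdet'] at hyd
    push_cast at hyc hyd
    rw [segment_add_smul _ _ k.cast_nonneg, heq]
    exact ⟨t, ⟨by linarith, by linarith⟩, rfl⟩
  · refine convex_dualFace.segment_subset (hmem ha hb hm) ?_
    simpa only [coeLat_add, coeLat_zsmul, Int.cast_natCast] using hmem
      (by rw [add_dotProduct, smul_dotProduct, ha, cross_dotProduct_left, smul_zero, add_zero])
      (by rw [add_dotProduct, smul_dotProduct, hb, cross_dotProduct_right, smul_zero, add_zero]) hm'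

/-- The lattice length of the dual face of the segment with end points `e.1` and `e.2`. -/
def dualLength (P : Set (Fin 3 → ℝ)) (e : (Fin 3 → ℤ) × (Fin 3 → ℤ)) : ℝ :=
  (latticePoints (dualFace P {coeLat e.1, coeLat e.2})).ncard - 1

lemma dualLength_swap (P : Set (Fin 3 → ℝ)) (a b : Fin 3 → ℤ) :
    dualLength P (b, a) = dualLength P (a, b) := by
  rw [dualLength, dualLength, Set.pair_comm]

lemma dualLength_eq {a b c m : Fin 3 → ℤ} {k : ℕ} (hdet : a ⨯₃ b ⬝ᵥ c = 1)
    (h : dualFace Δ {coeLat a, coeLat b} =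
      segment ℝ (coeLat m) (coeLat m + (k : ℝ) • coeLat (a ⨯₃ b))) :
    dualLength Δ (a, b) = k := by
  rw [dualLength, h, ncard_latticePoints_segment hdet, Nat.cast_succ, add_sub_cancel_right]

/-- The numerators are the values at `-ξ` of the vertices of the dual edge, which differ by a
multiple of the wall form. -/
lemma sum_wallForm_div_adjacent (hΔ : IsReflexive Δ)
    (hl : IsAdmissibleHeight hΔ.nonzeroPoints l) {a b c d : Fin 3 → ℤ}
    (h : (a, b, c) ∈ regularTriangulation hΔ.nonzeroPoints l)
    (h' : (b, a, d) ∈ regularTriangulation hΔ.nonzeroPoints l) {ξ : Fin 3 → ℝ}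
    (hξ : wallForm a b ξ ≠ 0) :
    (wallForm b c ξ + wallForm c a ξ + wallForm a b ξ) / wallForm a b ξ +
      (wallForm a d ξ + wallForm d b ξ + wallForm b a ξ) / wallForm b a ξ =
        dualLength Δ (a, b) := by
  have hV := hΔ.isReflexiveConfiguration
  have hdet := triple_product_eq_one hV hl h
  obtain ⟨m, k, ha, hb, hc, hd, hdual⟩ := exists_dualFace_pair_eq_segment hΔ hl h h'
  have hm := coeLat_dotProduct_eq_of_unimodular hdet m ξ
  have hm' := coeLat_dotProduct_eq_of_unimodular (triple_product_eq_one hV hl h') m ξ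
  rw [ha, hb, hc] at hm
  rw [ha, hb, hd, hm, wallForm_swap a b] at hm'
  push_cast at hm'
  rw [dualLength_eq hdet hdual, wallForm_swap a b]
  field_simp
  linarith

theorem sum_dualLength_orientedEdges (hΔ : IsReflexive Δ)
    (hl : IsAdmissibleHeight hΔ.nonzeroPoints l) :
    ∑ e ∈ orientedEdges (regularTriangulation hΔ.nonzeroPoints l), dualLength Δ e = 48 := by
  have hV := hΔ.isReflexiveConfiguration
  have hT := isUnimodularSurface_regularTriangulation hV hl
  obtain ⟨ξ, hξ⟩ := hT.isOpen_and_dense_setOf_isGeneric.2.nonempty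
  have hcancel := hT.sum_eq_zero_of_adjacent (fun a b c ↦
    (wallForm b c ξ + wallForm c a ξ + wallForm a b ξ) / wallForm a b ξ - dualLength Δ (a, b) / 2)
    fun a b c d h h' ↦ by
      linarith [sum_wallForm_div_adjacent hΔ hl h h' (hξ h), dualLength_swap Δ a b]
  rw [Finset.sum_sub_distrib, hT.sum_wallForm_add_div hξ, fanCoeff_zero_eq_three hV hl hξ,
    ← Finset.sum_div, ← hT.sum_orientedEdges (dualLength Δ)] at hcancel
  linarith

end DualEdges

/-! ### Edges of the polytope -/

section Edges

variable {Δ : Set (Fin 3 → ℝ)} {l : (Fin 3 → ℤ) → ℝ}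

lemma eq_smul_sub_add_of_wallForm_eq_zero {a b c m : Fin 3 → ℤ} {x : Fin 3 → ℝ}
    (h : a ⨯₃ b ⬝ᵥ c = 1) (ha : m ⬝ᵥ a = -1) (hb : m ⬝ᵥ b = -1) (hx : coeLat m ⬝ᵥ x = -1)
    (hwall : wallForm a b x = 0) :
    x = wallForm c a x • (coeLat b - coeLat a) + coeLat a := by
  have hm := coeLat_dotProduct_eq_of_unimodular h m x
  rw [hx, ha, hb, hwall] at hm
  push_cast at hm
  have hcomb : (1 : ℝ) • x =
      wallForm b c x • coeLat a + wallForm c a x • coeLat b + wallForm a b x • coeLat c := by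
    simpa only [wallForm, ← coeLat_cross, coeLat_dotProduct_coeLat, h, Int.cast_one] using
      triple_product_smul (coeLat a) (coeLat b) (coeLat c) x
  rw [one_smul, hwall, zero_smul, add_zero] at hcomb
  rw [eq_sub_of_add_eq (show wallForm b c x + wallForm c a x = 1 by linarith)] at hcomb
  rw (occs := [1]) [hcomb]
  module

lemma IsUnimodularSurface.ne_of_mem_orientedEdges
    {M : Finset ((Fin 3 → ℤ) × (Fin 3 → ℤ) × (Fin 3 → ℤ))} (h : IsUnimodularSurface M)
    {a b : Fin 3 → ℤ} (hab : (a, b) ∈ orientedEdges M) : a ≠ b := by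
  obtain ⟨c, hc⟩ := mem_orientedEdges.1 hab
  exact (pairwise_ne_of_triple_product_ne_zero (by rw [h.triple_product_eq_one hc]; decide)).1

lemma isFaceOfDim_faceClosure (hΔ : IsReflexive Δ) (hl : IsAdmissibleHeight hΔ.nonzeroPoints l)
    {a b : Fin 3 → ℤ} (h : (a, b) ∈ orientedEdges (regularTriangulation hΔ.nonzeroPoints l))
    (hlength : dualLength Δ (a, b) ≠ 0) :
    IsFaceOfDim Δ 1 (faceClosure Δ {coeLat a, coeLat b}) := by
  have hV := hΔ.isReflexiveConfiguration
  have hT := isUnimodularSurface_regularTriangulation hV hl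
  obtain ⟨c, hc⟩ := mem_orientedEdges.1 h
  obtain ⟨d, hd⟩ := hT.exists_adjacent hc
  have hdet := hT.triple_product_eq_one hc
  obtain ⟨m, k, ha, hb, -, -, hdual⟩ := exists_dualFace_pair_eq_segment hΔ hl hc hd
  rw [dualLength_eq hdet hdual] at hlength
  obtain ⟨haV, hbV, -⟩ := mem_of_mem_regularTriangulation hc
  obtain ⟨haF, hbF⟩ := Set.pair_subset_iff.1 (subset_faceClosure (Set.pair_subset_iff.2
    ⟨(hΔ.mem_nonzeroPoints.1 haV).2, (hΔ.mem_nonzeroPoints.1 hbV).2⟩))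
  refine ⟨isExposed_faceClosure hdual, ⟨_, haF⟩, dimSet_eq_one_iff.2 ⟨?_, _, haF, _, hbF, ?_⟩⟩
  · refine (collinear_iff_of_mem haF).2 ⟨coeLat b - coeLat a, fun x hx ↦ ⟨wallForm c a x, ?_⟩⟩
    have hmx := hx.2 (coeLat m) (hdual ▸ left_mem_segment ℝ _ _)
    have hmx' := hx.2 _ (hdual ▸ right_mem_segment ℝ _ _)
    rw [add_dotProduct, hmx, smul_dotProduct, add_eq_left, smul_eq_mul] at hmx'
    exact eq_smul_sub_add_of_wallForm_eq_zero hdet ha hb hmx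
      ((mul_eq_zero_iff_left hlength).1 hmx')
  · exact coeLat_injective.ne (hT.ne_of_mem_orientedEdges h)

end Edges

section EdgePoints

variable {V : Finset (Fin 3 → ℤ)} {l : (Fin 3 → ℤ) → ℝ}

lemma eq_or_eq_of_mem_segment (hV : IsReflexiveConfiguration V) (hl : IsAdmissibleHeight V l)
    {a b p : Fin 3 → ℤ} (h : (a, b) ∈ orientedEdges (regularTriangulation V l))
    (hp : coeLat p ∈ segment ℝ (coeLat a) (coeLat b)) : p = a ∨ p = b := by
  obtain ⟨c, hc⟩ := mem_orientedEdges.1 h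
  have hdet := triple_product_eq_one hV hl hc
  obtain ⟨s, t, hs, ht, hst, hp⟩ := hp
  have hcoord : ∀ u v, ((u ⨯₃ v ⬝ᵥ p : ℤ) : ℝ) =
      s * (u ⨯₃ v ⬝ᵥ a : ℤ) + t * (u ⨯₃ v ⬝ᵥ b : ℤ) := fun u v ↦ by
    simp only [← coeLat_dotProduct_coeLat, ← hp, dotProduct_add, dotProduct_smul, smul_eq_mul]
  have hx := hcoord b c
  have hy := hcoord c a
  have hz := hcoord a b
  rw [triple_product_rotate a b c, hdet, cross_dotProduct_left, Int.cast_one, Int.cast_zero] at hx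
  rw [cross_dotProduct_right, triple_product_rotate b c a, triple_product_rotate a b c, hdet,
    Int.cast_one, Int.cast_zero] at hy
  rw [cross_dotProduct_left, cross_dotProduct_right, Int.cast_zero, mul_zero, mul_zero, add_zero,
    Int.cast_eq_zero] at hz
  rcases eq_vertex_of_triple_products_nonneg hV hl hc
    (by rify; linarith) (by rify; linarith) hz.ge (by rify; rw [hz, hdet]; push_cast; linarith)
    with rfl | rfl | rfl
  · exact Or.inl rfl
  · exact Or.inr rfl
  · exact absurd (hz.symm.trans hdet) zero_ne_one

lemma exists_eq_nsmul_add (hV : IsReflexiveConfiguration V) (hl : IsAdmissibleHeight V l)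
    (p : Fin 3 → ℤ) : ∃ a b c, (a, b, c) ∈ regularTriangulation V l ∧
      ∃ x y z : ℕ, p = x • a + y • b + z • c := by
  obtain ⟨a, b, c, h, hx, hy, hz⟩ := exists_mem_closedCone hV hl (coeLat p)
  rw [wallForm_coeLat, Int.cast_nonneg_iff] at hx hy hz
  have hp := triple_product_smul a b c p
  lift b ⨯₃ c ⬝ᵥ p to ℕ using hx with x
  lift c ⨯₃ a ⬝ᵥ p to ℕ using hy with y
  lift a ⨯₃ b ⬝ᵥ p to ℕ using hz with z
  rw [triple_product_eq_one hV hl h, one_smul] at hp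
  exact ⟨a, b, c, h, x, y, z, by simpa only [natCast_zsmul] using hp⟩

lemma IsOrientedSurface.exists_add_eq {α : Type*} [AddCommMonoid α] {M : Finset (α × α × α)}
    (hM : IsOrientedSurface M) {a b c : α} (h : (a, b, c) ∈ M) {x y z : ℕ} (hsum : x + y + z = 2)
    {S : Set α} (ha : x ≠ 0 → a ∈ S) (hb : y ≠ 0 → b ∈ S) (hc : z ≠ 0 → c ∈ S) :
    ∃ p ∈ S, ∃ q ∈ S, x • a + y • b + z • c = p + q ∧ (p = q ∨ (p, q) ∈ orientedEdges M) := by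
  have hab : (a, b) ∈ orientedEdges M := mem_orientedEdges.2 ⟨c, h⟩
  have hbc : (b, c) ∈ orientedEdges M := mem_orientedEdges.2 ⟨a, hM.rotate h⟩
  have hca : (c, a) ∈ orientedEdges M := mem_orientedEdges.2 ⟨b, hM.rotate (hM.rotate h)⟩
  obtain ⟨rfl, rfl, rfl⟩ | ⟨rfl, rfl, rfl⟩ | ⟨rfl, rfl, rfl⟩ | ⟨rfl, rfl, rfl⟩ | ⟨rfl, rfl, rfl⟩ |
      ⟨rfl, rfl, rfl⟩ : (x = 2 ∧ y = 0 ∧ z = 0) ∨ (x = 0 ∧ y = 2 ∧ z = 0) ∨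
      (x = 0 ∧ y = 0 ∧ z = 2) ∨ (x = 1 ∧ y = 1 ∧ z = 0) ∨ (x = 0 ∧ y = 1 ∧ z = 1) ∨
      (x = 1 ∧ y = 0 ∧ z = 1) := by omega
  · exact ⟨a, ha two_ne_zero, a, ha two_ne_zero, by simp [two_nsmul], Or.inl rfl⟩
  · exact ⟨b, hb two_ne_zero, b, hb two_ne_zero, by simp [two_nsmul], Or.inl rfl⟩
  · exact ⟨c, hc two_ne_zero, c, hc two_ne_zero, by simp [two_nsmul], Or.inl rfl⟩
  · exact ⟨a, ha one_ne_zero, b, hb one_ne_zero, by simp, Or.inr hab⟩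
  · exact ⟨b, hb one_ne_zero, c, hc one_ne_zero, by simp, Or.inr hbc⟩
  · exact ⟨c, hc one_ne_zero, a, ha one_ne_zero, by simp [add_comm], Or.inr hca⟩

/-- The support of the triangle whose cone contains `a + b` shows that the coefficients of `a + b`
sum to at most `2`, the support `y` that they sum to at least `2`. -/
lemma exists_tight_add_eq (hV : IsReflexiveConfiguration V) (hl : IsAdmissibleHeight V l)
    {y : Fin 3 → ℝ} (hy : ∀ v ∈ V, -1 ≤ y ⬝ᵥ coeLat v) {a b : Fin 3 → ℤ} (haV : a ∈ V)
    (hbV : b ∈ V) (ha : y ⬝ᵥ coeLat a = -1) (hb : y ⬝ᵥ coeLat b = -1) :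
    ∃ p ∈ {v | v ∈ V ∧ y ⬝ᵥ coeLat v = -1}, ∃ q ∈ {v | v ∈ V ∧ y ⬝ᵥ coeLat v = -1},
      a + b = p + q ∧ (p = q ∨ (p, q) ∈ orientedEdges (regularTriangulation V l)) := by
  obtain ⟨p, q, r, h, i, j, k, hab⟩ := exists_eq_nsmul_add hV hl (a + b)
  obtain ⟨hp, hq, hr⟩ := mem_of_mem_regularTriangulation h
  obtain ⟨m, hmp, hmq, hmr, hm⟩ := exists_integral_support hV hl h
  have hle : i + j + k ≤ 2 := by
    have hdot := congrArg (m ⬝ᵥ ·) hab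
    simp only [← natCast_zsmul, dotProduct_add, dotProduct_smul, hmp, hmq, hmr,
      smul_eq_mul] at hdot
    have hma := hm a haV
    have hmb := hm b hbV
    omega
  have hdot : (i : ℝ) * (y ⬝ᵥ coeLat p + 1) + j * (y ⬝ᵥ coeLat q + 1) +
      k * (y ⬝ᵥ coeLat r + 1) = i + j + k - 2 := by
    have hdot := congrArg (y ⬝ᵥ coeLat ·) hab
    simp only [← natCast_zsmul, coeLat_add, coeLat_zsmul, dotProduct_add, dotProduct_smul, ha, hb,
      smul_eq_mul, Int.cast_natCast] at hdot
    linarith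
  have hle' : (i : ℝ) + j + k ≤ 2 := by exact_mod_cast hle
  have hp₀ := mul_nonneg i.cast_nonneg (neg_le_iff_add_nonneg.1 (hy p hp))
  have hq₀ := mul_nonneg j.cast_nonneg (neg_le_iff_add_nonneg.1 (hy q hq))
  have hr₀ := mul_nonneg k.cast_nonneg (neg_le_iff_add_nonneg.1 (hy r hr))
  have htight : ∀ {n : ℕ} {v}, v ∈ V → (n : ℝ) * (y ⬝ᵥ coeLat v + 1) ≤ 0 → n ≠ 0 →
      v ∈ {v | v ∈ V ∧ y ⬝ᵥ coeLat v = -1} := fun hv hle hn ↦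
    ⟨hv, by nlinarith [hy _ hv, (Nat.cast_pos (α := ℝ)).2 (Nat.pos_of_ne_zero hn)]⟩
  rw [hab]
  refine (isUnimodularSurface_regularTriangulation hV hl).exists_add_eq h ?_
    (htight hp (by linarith)) (htight hq (by linarith)) (htight hr (by linarith))
  exact_mod_cast (by linarith : (i : ℝ) + j + k = 2)

end EdgePoints

/-! ### Lattice points and triangulation edges on an edge of the polytope -/

section Counting

lemma card_eq_two_mul_card_filter_lt {α β : Type*} [LinearOrder β] {E : Finset (α × α)} (f : α → β)
    (hswap : ∀ e ∈ E, e.swap ∈ E) (hne : ∀ e ∈ E, f e.1 ≠ f e.2) :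
    E.card = 2 * (E.filter fun e ↦ f e.1 < f e.2).card := by
  have hcard : (E.filter fun e ↦ ¬ f e.1 < f e.2).card = (E.filter fun e ↦ f e.1 < f e.2).card :=
    Finset.card_nbij' Prod.swap Prod.swap
      (fun e he ↦ by
        obtain ⟨he, hlt⟩ := Finset.mem_filter.1 he
        exact Finset.mem_filter.2 ⟨hswap e he, (not_lt.1 hlt).lt_of_ne' (hne e he)⟩)
      (fun e he ↦ by
        obtain ⟨he, hlt⟩ := Finset.mem_filter.1 he
        exact Finset.mem_filter.2 ⟨hswap e he, hlt.not_gt⟩)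
      (fun e _ ↦ e.swap_swap) (fun e _ ↦ e.swap_swap)
  rw [← Finset.card_filter_add_card_filter_not (s := E) (fun e ↦ f e.1 < f e.2), hcard, two_mul]

lemma card_consecutive_add_one {α β : Type*} [LinearOrder β] {L : Finset α} {P : Finset (α × α)}
    {f : α → β} (hL : L.Nonempty) (hf : Set.InjOn f L)
    (hP : ∀ a b, (a, b) ∈ P ↔
      a ∈ L ∧ b ∈ L ∧ f a < f b ∧ ∀ x ∈ L, f a < f x → f b ≤ f x) : P.card + 1 = L.card := by
  classical
  obtain ⟨m, hm, hmin⟩ := L.exists_min_image f hL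
  suffices hcard : P.card = (L.erase m).card by rw [hcard, Finset.card_erase_add_one hm]
  refine Finset.card_bij (fun e _ ↦ e.2) ?_ ?_ ?_
  · rintro ⟨a, b⟩ hab
    obtain ⟨ha, hb, hlt, -⟩ := (hP a b).1 hab
    exact Finset.mem_erase.2 ⟨fun h ↦ ((hmin a ha).trans_lt hlt).ne (congrArg f h.symm), hb⟩
  · rintro ⟨a, b⟩ hab ⟨a', _⟩ hab' rfl
    obtain ⟨ha, -, hlt, hgap⟩ := (hP a b).1 hab
    obtain ⟨ha', -, hlt', hgap'⟩ := (hP a' b).1 hab'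
    have heq : f a = f a' := le_antisymm (not_lt.1 fun h ↦ (hgap' a ha h).not_gt hlt)
      (not_lt.1 fun h ↦ (hgap a' ha' h).not_gt hlt')
    rw [hf ha ha' heq]
  · intro b hb
    obtain ⟨hbm, hb⟩ := Finset.mem_erase.1 hb
    have hlt : f m < f b := (hmin b hb).lt_of_ne fun h ↦ hbm (hf hb hm h.symm)
    obtain ⟨a, ha, hmax⟩ := (L.filter (f · < f b)).exists_max_image f
      ⟨m, Finset.mem_filter.2 ⟨hm, hlt⟩⟩
    obtain ⟨ha, hab⟩ := Finset.mem_filter.1 ha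
    refine ⟨(a, b), (hP a b).2 ⟨ha, hb, hab, fun x hx hax ↦ ?_⟩, rfl⟩
    exact not_lt.1 fun hxb ↦ (hmax x (Finset.mem_filter.2 ⟨hx, hxb⟩)).not_gt hax

variable {Δ θ : Set (Fin 3 → ℝ)} {l : (Fin 3 → ℤ) → ℝ} {y : Fin 3 → ℝ}

lemma le_apply_of_mem_orientedEdges {V : Finset (Fin 3 → ℤ)} (hV : IsReflexiveConfiguration V)
    (hl : IsAdmissibleHeight V l) (hcol : Collinear ℝ θ) {i : Fin 3} {a b p : Fin 3 → ℤ}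
    (h : (a, b) ∈ orientedEdges (regularTriangulation V l)) (ha : coeLat a ∈ θ)
    (hb : coeLat b ∈ θ) (hp : coeLat p ∈ θ) (hap : a i < p i) : b i ≤ p i := by
  by_contra! hpb
  rcases eq_or_eq_of_mem_segment hV hl h (mem_segment_of_collinear hcol ha hb hp
    (Int.cast_lt.2 hap) (Int.cast_lt.2 hpb)) with rfl | rfl
  exacts [hap.false, hpb.false]

lemma IsReflexive.coeLat_mem_setOf_dotProduct_eq_iff (hΔ : IsReflexive Δ) {p : Fin 3 → ℤ} :
    coeLat p ∈ {x ∈ Δ | y ⬝ᵥ x = -1} ↔ p ∈ hΔ.nonzeroPoints ∧ y ⬝ᵥ coeLat p = -1 := by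
  rw [hΔ.mem_nonzeroPoints]
  refine ⟨fun ⟨hp, hyp⟩ ↦ ⟨⟨?_, hp⟩, hyp⟩, fun ⟨⟨_, hp⟩, hyp⟩ ↦ ⟨hp, hyp⟩⟩
  rintro rfl
  rw [coeLat_zero, dotProduct_zero] at hyp
  norm_num at hyp

lemma mem_orientedEdges_of_consecutive (hΔ : IsReflexive Δ)
    (hl : IsAdmissibleHeight hΔ.nonzeroPoints l) (hy : y ∈ polarDual Δ)
    (hθ : θ = {x ∈ Δ | y ⬝ᵥ x = -1}) (hcol : Collinear ℝ θ) {i : Fin 3}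
    (hi : Set.InjOn (fun x ↦ x i) θ) {a b : Fin 3 → ℤ} (ha : coeLat a ∈ θ) (hb : coeLat b ∈ θ)
    (hab : a i < b i) (hgap : ∀ p, coeLat p ∈ θ → a i < p i → b i ≤ p i) :
    (a, b) ∈ orientedEdges (regularTriangulation hΔ.nonzeroPoints l) := by
  have hV := hΔ.isReflexiveConfiguration
  have hT := isUnimodularSurface_regularTriangulation hV hl
  have of_edge : ∀ {p q : Fin 3 → ℤ}, coeLat p ∈ θ → coeLat q ∈ θ → a + b = p + q →
      (p, q) ∈ orientedEdges (regularTriangulation hΔ.nonzeroPoints l) → p i ≤ q i →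
      (a, b) ∈ orientedEdges (regularTriangulation hΔ.nonzeroPoints l) := by
    intro p q hp hq hsum hpq hle
    have hsumi : a i + b i = p i + q i := congrFun hsum i
    rcases lt_trichotomy (p i) (a i) with hpa | hpa | hap
    · have := le_apply_of_mem_orientedEdges hV hl hcol hpq hp hq ha hpa
      omega
    · obtain rfl : p = a := coeLat_injective (hi hp ha (congrArg Int.cast hpa))
      rwa [add_left_cancel hsum]
    · have := hgap p hp hap
      omega
  have hmem : ∀ p, coeLat p ∈ θ ↔ p ∈ hΔ.nonzeroPoints ∧ y ⬝ᵥ coeLat p = -1 := fun p ↦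
    hθ ▸ hΔ.coeLat_mem_setOf_dotProduct_eq_iff
  obtain ⟨haV, hya⟩ := (hmem a).1 ha
  obtain ⟨hbV, hyb⟩ := (hmem b).1 hb
  obtain ⟨p, hp, q, hq, hsum, rfl | hpq⟩ := exists_tight_add_eq hV hl
    (fun v hv ↦ hy _ (hΔ.mem_nonzeroPoints.1 hv).2) haV hbV hya hyb
  · have hsumi : a i + b i = p i + p i := congrFun hsum i
    have := hgap p ((hmem p).2 hp)
    omega
  · rcases le_total (p i) (q i) with hle | hle
    · exact of_edge ((hmem p).2 hp) ((hmem q).2 hq) hsum hpq hle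
    · exact of_edge ((hmem q).2 hq) ((hmem p).2 hp) (hsum.trans (add_comm p q))
        (hT.swap_mem_orientedEdges hpq) hle

lemma IsReflexive.latticePoints_nonempty_of_mem {d : ℕ} {Δ : Set (Fin d → ℝ)}
    (hΔ : IsReflexive Δ) {x y : Fin d → ℝ} (hx : x ∈ Δ) (hy : y ∈ polarDual Δ)
    (hyx : y ⬝ᵥ x = -1) : (latticePoints {x ∈ Δ | y ⬝ᵥ x = -1}).Nonempty := by
  by_contra! hempty
  have hsub : Δ ⊆ {x | -1 < y ⬝ᵥ x} :=
    hΔ.subset_of_forall_nonzeroPoints_mem (convex_halfSpace_gt (dotProductBilin ℝ ℝ y).isLinear _)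
      (by simp) fun v hv ↦ by
        have hvΔ := (hΔ.mem_nonzeroPoints.1 hv).2
        exact (hy _ hvΔ).lt_of_ne fun h ↦ Set.eq_empty_iff_forall_notMem.1 hempty v ⟨hvΔ, h.symm⟩
  exact (hsub hx).ne' hyx

open Classical in
/-- The oriented edges of the triangulation `M` with both ends in `θ`. -/
def edgesIn (M : Finset ((Fin 3 → ℤ) × (Fin 3 → ℤ) × (Fin 3 → ℤ))) (θ : Set (Fin 3 → ℝ)) :
    Finset ((Fin 3 → ℤ) × (Fin 3 → ℤ)) :=
  {e ∈ orientedEdges M | coeLat e.1 ∈ θ ∧ coeLat e.2 ∈ θ}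

lemma mem_edgesIn {M : Finset ((Fin 3 → ℤ) × (Fin 3 → ℤ) × (Fin 3 → ℤ))} {a b : Fin 3 → ℤ} :
    (a, b) ∈ edgesIn M θ ↔ (a, b) ∈ orientedEdges M ∧ coeLat a ∈ θ ∧ coeLat b ∈ θ := by
  classical
  exact Finset.mem_filter

lemma card_edgesIn (hΔ : IsReflexive Δ) (hl : IsAdmissibleHeight hΔ.nonzeroPoints l)
    (hy : y ∈ polarDual Δ) (hθ : θ = {x ∈ Δ | y ⬝ᵥ x = -1}) (hcol : Collinear ℝ θ)
    (hnt : θ.Nontrivial) :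
    (edgesIn (regularTriangulation hΔ.nonzeroPoints l) θ).card + 2 =
      2 * (latticePoints θ).ncard := by
  have hV := hΔ.isReflexiveConfiguration
  have hT := isUnimodularSurface_regularTriangulation hV hl
  obtain ⟨i, hi⟩ := exists_injOn_apply hcol hnt
  have hfin : (latticePoints θ).Finite :=
    finite_latticePoints (hΔ.1.isCompact.isBounded.subset (hθ ▸ Set.sep_subset _ _))
  have hne : (latticePoints θ).Nonempty := by
    obtain ⟨x, hx, hyx⟩ := hθ ▸ hnt.nonempty
    exact hθ ▸ hΔ.latticePoints_nonempty_of_mem hx hy hyx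
  have hinj : Set.InjOn (fun p : Fin 3 → ℤ ↦ p i) (latticePoints θ) := fun p hp q hq h ↦
    coeLat_injective (hi hp hq (congrArg Int.cast h))
  set E := edgesIn (regularTriangulation hΔ.nonzeroPoints l) θ
  have hdouble : E.card = 2 * (E.filter fun e ↦ e.1 i < e.2 i).card := by
    refine card_eq_two_mul_card_filter_lt (fun p : Fin 3 → ℤ ↦ p i) ?_ ?_
    · rintro ⟨a, b⟩ hab
      obtain ⟨hab, ha, hb⟩ := mem_edgesIn.1 hab
      exact mem_edgesIn.2 ⟨hT.swap_mem_orientedEdges hab, hb, ha⟩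
    · rintro ⟨a, b⟩ hab heq
      obtain ⟨hab, ha, hb⟩ := mem_edgesIn.1 hab
      exact hT.ne_of_mem_orientedEdges hab (hinj ha hb heq)
  have hconsecutive : (E.filter fun e ↦ e.1 i < e.2 i).card + 1 = hfin.toFinset.card := by
    refine card_consecutive_add_one (f := fun p ↦ p i) (hfin.toFinset_nonempty.2 hne)
      (by simpa using hinj) fun a b ↦ ?_
    simp only [Finset.mem_filter, E, mem_edgesIn, hfin.mem_toFinset]
    constructor
    · rintro ⟨⟨hab, ha, hb⟩, hlt⟩
      exact ⟨ha, hb, hlt, fun p hp ↦ le_apply_of_mem_orientedEdges hV hl hcol hab ha hb hp⟩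
    · rintro ⟨ha, hb, hlt, hgap⟩
      exact ⟨⟨mem_orientedEdges_of_consecutive hΔ hl hy hθ hcol hi ha hb hlt hgap, ha, hb⟩, hlt⟩
  rw [Set.ncard_eq_toFinset_card _ hfin]
  omega

end Counting

/-! ### The weighted count of edges -/

lemma finsum_mem_eq_sum_of_fiberwise {ι κ A : Type*} [AddCommMonoid A] {E : Finset ι} (φ : ι → κ)
    [DecidableEq κ] {S : Set κ} {g : κ → A} {w : ι → A}
    (hfiber : ∀ θ ∈ S, ∑ e ∈ E with φ e = θ, w e = g θ) (hS : ∀ e ∈ E, w e ≠ 0 → φ e ∈ S) :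
    ∑ᶠ θ ∈ S, g θ = ∑ e ∈ E, w e := by
  classical
  have hsupport : S ∩ Function.support g =
      ↑((E.image φ).filter (· ∈ S)) ∩ Function.support g := by
    ext θ
    simp only [Set.mem_inter_iff, Finset.coe_filter, Finset.mem_image, Set.mem_ofPred_eq]
    refine and_congr_left fun hg ↦ ⟨fun hθ ↦ ⟨?_, hθ⟩, And.right⟩
    obtain ⟨e, he, -⟩ := Finset.exists_ne_zero_of_sum_ne_zero ((hfiber θ hθ).trans_ne hg)
    exact ⟨e, Finset.mem_filter.1 he⟩
  rw [finsum_mem_eq_sum_of_inter_support_eq g hsupport,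
    Finset.sum_congr rfl fun θ hθ ↦ (hfiber θ (Finset.mem_filter.1 hθ).2).symm,
    Finset.sum_filter_of_ne, Finset.sum_fiberwise_of_maps_to fun _ ↦ Finset.mem_image_of_mem φ]
  intro θ _ hne
  obtain ⟨e, he, hwe⟩ := Finset.exists_ne_zero_of_sum_ne_zero hne
  obtain ⟨heE, rfl⟩ := Finset.mem_filter.1 he
  exact hS e heE hwe

section EdgeSum

variable {Δ θ : Set (Fin 3 → ℝ)} {l : (Fin 3 → ℤ) → ℝ}

lemma faceClosure_eq_iff (hΔ : IsReflexive Δ) (hdim : dimSet Δ ≠ 1) (hθ : IsFaceOfDim Δ 1 θ)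
    {a b : Fin 3 → ℤ} (ha : a ∈ hΔ.nonzeroPoints) (hb : b ∈ hΔ.nonzeroPoints) (hab : a ≠ b) :
    faceClosure Δ {coeLat a, coeLat b} = θ ↔ coeLat a ∈ θ ∧ coeLat b ∈ θ := by
  constructor
  · rintro rfl
    exact Set.pair_subset_iff.1 (subset_faceClosure (Set.pair_subset_iff.2
      ⟨(hΔ.mem_nonzeroPoints.1 ha).2, (hΔ.mem_nonzeroPoints.1 hb).2⟩))
  · rintro ⟨haθ, hbθ⟩
    obtain ⟨y, hy, hyθ⟩ := hΔ.exists_eq_setOf_dotProduct_eq hθ hdim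
    exact faceClosure_eq_of_collinear hy hyθ (dimSet_eq_one_iff.1 hθ.2.2).1 haθ hbθ
      (coeLat_injective.ne hab)

open Classical in
lemma sum_dualLength_faceClosure_eq (hΔ : IsReflexive Δ)
    (hl : IsAdmissibleHeight hΔ.nonzeroPoints l) (hdim : dimSet Δ ≠ 1)
    (hθ : IsFaceOfDim Δ 1 θ) :
    ∑ e ∈ orientedEdges (regularTriangulation hΔ.nonzeroPoints l)
        with faceClosure Δ {coeLat e.1, coeLat e.2} = θ, dualLength Δ e =
      2 * (((latticePoints θ).ncard - 1) * ((latticePoints (dualFace Δ θ)).ncard - 1)) := by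
  have hT := isUnimodularSurface_regularTriangulation hΔ.isReflexiveConfiguration hl
  obtain ⟨hcol, hnt⟩ := dimSet_eq_one_iff.1 hθ.2.2
  obtain ⟨y, hy, hyθ⟩ := hΔ.exists_eq_setOf_dotProduct_eq hθ hdim
  have hcard : ((edgesIn (regularTriangulation hΔ.nonzeroPoints l) θ).card : ℝ) + 2 =
      2 * (latticePoints θ).ncard := by exact_mod_cast card_edgesIn hΔ hl hy hyθ hcol hnt
  have hlength : ∀ e ∈ edgesIn (regularTriangulation hΔ.nonzeroPoints l) θ,
      dualLength Δ e = (latticePoints (dualFace Δ θ)).ncard - 1 := by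
    rintro ⟨a, b⟩ hab
    obtain ⟨hab, ha, hb⟩ := mem_edgesIn.1 hab
    rw [dualLength, dualFace_eq_of_collinear hcol ha hb
      (coeLat_injective.ne (hT.ne_of_mem_orientedEdges hab))]
  calc _ = ∑ e ∈ edgesIn (regularTriangulation hΔ.nonzeroPoints l) θ, dualLength Δ e := by
        refine Finset.sum_congr (Finset.filter_congr ?_) fun _ _ ↦ rfl
        rintro ⟨a, b⟩ hab
        obtain ⟨c, hc⟩ := mem_orientedEdges.1 hab
        obtain ⟨ha, hb, -⟩ := mem_of_mem_regularTriangulation hc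
        exact faceClosure_eq_iff hΔ hdim hθ ha hb (hT.ne_of_mem_orientedEdges hab)
    _ = _ := by
        rw [Finset.sum_congr rfl hlength, Finset.sum_const, nsmul_eq_mul]
        linear_combination ((latticePoints (dualFace Δ θ)).ncard - 1 : ℝ) * hcard

end EdgeSum

theorem reflexive_3d_twentyfour (Δ : Set (Fin 3 → ℝ))
    (hΔ : IsReflexive Δ) (hdim : dimSet Δ = 3) :
    ∑ᶠ θ ∈ {θ : Set (Fin 3 → ℝ) | IsFaceOfDim Δ 1 θ},
      (((latticePoints θ).ncard : ℝ) - 1) *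
        (((latticePoints (dualFace Δ θ)).ncard : ℝ) - 1) = 24 := by
  classical
  obtain ⟨l, hl⟩ := exists_isAdmissibleHeight hΔ.nonzeroPoints
  have hdim' : dimSet Δ ≠ 1 := by omega
  rw [finsum_mem_eq_sum_of_fiberwise (E := orientedEdges (regularTriangulation hΔ.nonzeroPoints l))
    (fun e ↦ faceClosure Δ {coeLat e.1, coeLat e.2}) (w := fun e ↦ dualLength Δ e / 2),
    ← Finset.sum_div, sum_dualLength_orientedEdges hΔ hl]
  · norm_num
  · intro θ hθ
    rw [← Finset.sum_div, sum_dualLength_faceClosure_eq hΔ hl hdim' hθ,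
      mul_div_cancel_left₀ _ two_ne_zero]
  · rintro ⟨a, b⟩ hab hne
    exact isFaceOfDim_faceClosure hΔ hl hab (div_ne_zero_iff.1 hne).1

end
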